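/- Let d ≥ 1, ν ∈ (0,2), γ ≤ 0. Let (F_N)_{N≥2} be a sequence where each F_N is a symmetric probability density on ℝ^{dN}, and let π be a Borel probability measure on the space of Borel probability measures on ℝ^d (endowed with the topology of weak convergence) such that for every j ≥ 2 the j-particle marginal F_N^j (the pushforward of F_N by the projection onto the first j coordinates in ℝ^d) converges weakly, as N → ∞, to the mixture ∫ ρ^{⊗j} π(dρ). Then liminf_{N→∞} I^N_{ν,γ}(F_N) ≥ ∫ |⟨·⟩^{γ/2} √ρ|²_{H^{ν/2}(ℝ^d)} π(dρ), where the integrand is understood as the seminorm of ⟨·⟩^{γ/2}√(dρ/dx) when ρ is absolutely continuous and as +∞ otherwise. -/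

import Mathlib

open MeasureTheory ENNReal

noncomputable section

open scoped Classical

/-- `ℝ^d` as a Euclidean space. -/
abbrev Euc (d : ℕ) := EuclideanSpace ℝ (Fin d)

/-- Japanese bracket `⟨x⟩ = √(1+|x|²)`. -/
def jap {d : ℕ} (x : Euc d) : ℝ := Real.sqrt (1 + ‖x‖^2)

/-- Fractional Sobolev seminorm squared `|f|²_{H^s(ℝ^d)}`, valued in `[0,∞]`. -/
def fracSobolevSq (d : ℕ) (s : ℝ) (f : Euc d → ℝ) : ℝ≥0∞ :=
  ∫⁻ x : Euc d, ∫⁻ y : Euc d, ENNReal.ofReal ((f x - f y)^2 / ‖x - y‖ ^ ((d : ℝ) + 2*s))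

/-- Weighted normalized fractional Fisher information `I^N_{ν,γ}`, valued in `[0,∞]`. -/
def fisherInfo (d N : ℕ) (ν γ : ℝ) (G : (Fin N → Euc d) → ℝ) : ℝ≥0∞ :=
  (N : ℝ≥0∞)⁻¹ * ∑ i : Fin N, ∫⁻ V : Fin N → Euc d, ∫⁻ w : Euc d,
    ENNReal.ofReal ((jap (V i) ^ (γ/2) * Real.sqrt (G V)
      - jap w ^ (γ/2) * Real.sqrt (G (Function.update V i w)))^2
      / ‖V i - w‖ ^ ((d : ℝ) + ν))

/-- A probability density: measurable, nonnegative, total mass one. -/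
def IsProbDensity {α : Type*} [MeasureSpace α] (f : α → ℝ) : Prop :=
  Measurable f ∧ (∀ x, 0 ≤ f x) ∧ ∫⁻ x, ENNReal.ofReal (f x) = 1

/-- A symmetric (exchangeable) probability density on `(ℝ^d)^N`. -/
def IsSymDensity (d N : ℕ) (F : (Fin N → Euc d) → ℝ) : Prop :=
  IsProbDensity F ∧ ∀ (σ : Equiv.Perm (Fin N)) (V : Fin N → Euc d), F (V ∘ σ) = F V

/-- Borel σ-algebra on the space of probability measures with its weak topology. -/
instance pmBorel {α : Type*} [MeasurableSpace α] [TopologicalSpace α]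
    [OpensMeasurableSpace α] : MeasurableSpace (ProbabilityMeasure α) := borel _

/-- `|⟨·⟩^{γ/2} √ρ|²_{H^{ν/2}}` for a measure `ρ`: the seminorm of the square root of its
Lebesgue density when `ρ ≪ volume`, and `+∞` otherwise. -/

def wSob (d : ℕ) (ν γ : ℝ) (ρ : Measure (Euc d)) : ℝ≥0∞ :=
  if ρ ≪ (volume : Measure (Euc d)) then
    fracSobolevSq d (ν/2)
      (fun v => jap v ^ (γ/2) * Real.sqrt ((ρ.rnDeriv volume v).toReal))
  else ⊤

lemma jap_one_le {d : ℕ} (x : Euc d) : 1 ≤ jap x := by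
  unfold jap
  rw [Real.one_le_sqrt]
  nlinarith [sq_nonneg ‖x‖]

lemma jap_cont {d : ℕ} : Continuous (jap : Euc d → ℝ) := by
  unfold jap
  fun_prop

/-- the weight -/
def wt {d : ℕ} (γ : ℝ) (x : Euc d) : ℝ := jap x ^ (γ/2)

lemma wt_pos {d : ℕ} (γ : ℝ) (x : Euc d) : 0 < wt γ x :=
  Real.rpow_pos_of_pos (lt_of_lt_of_le one_pos (jap_one_le x)) _

lemma wt_le_one {d : ℕ} {γ : ℝ} (hγ : γ ≤ 0) (x : Euc d) : wt γ x ≤ 1 :=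
  Real.rpow_le_one_of_one_le_of_nonpos (jap_one_le x) (by linarith)

lemma wt_cont {d : ℕ} (γ : ℝ) : Continuous (wt γ : Euc d → ℝ) := by
  unfold wt
  exact jap_cont.rpow_const (fun x => Or.inl (by have := jap_one_le x; positivity))

/-- one-particle energy -/
def JJ (d : ℕ) (ν γ : ℝ) (G : Euc d → ℝ) : ℝ≥0∞ :=
  ∫⁻ x : Euc d, ∫⁻ w : Euc d, ENNReal.ofReal ((jap x ^ (γ/2) * Real.sqrt (G x)
      - jap w ^ (γ/2) * Real.sqrt (G w))^2 / ‖x - w‖ ^ ((d : ℝ) + ν))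

def Good (d : ℕ) (ν γ : ℝ) (h : BoundedContinuousFunction (Euc d) ℝ) : Prop :=
  ∀ G : Euc d → ℝ, Measurable G → (∀ x, 0 ≤ G x) → Integrable G →
    ENNReal.ofReal (∫ x, h x * G x) ≤ JJ d ν γ G

lemma ofReal_integral_le' {α : Type*} [MeasurableSpace α] (μ : Measure α) (f : α → ℝ) :
    ENNReal.ofReal (∫ x, f x ∂μ) ≤ ∫⁻ x, ENNReal.ofReal (f x) ∂μ := by
  by_cases hf : Integrable f μ
  · rw [integral_eq_lintegral_pos_part_sub_lintegral_neg_part hf]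
    refine le_trans (ENNReal.ofReal_le_ofReal (sub_le_self _ ENNReal.toReal_nonneg)) ?_
    exact ENNReal.ofReal_toReal_le
  · rw [integral_undef hf]; simp

lemma mp_cons {E : Type*} [MeasurableSpace E] (μ : Measure E) [SigmaFinite μ] (n : ℕ) :
    MeasurePreserving (fun z : E × (Fin n → E) => (Fin.cons z.1 z.2 : Fin (n+1) → E))
      (μ.prod (Measure.pi fun _ => μ)) (Measure.pi fun _ : Fin (n+1) => μ) := by
  have := (measurePreserving_piFinSuccAbove (fun _ : Fin (n+1) => μ) 0).symm
  convert this using 1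
  funext z
  exact (Fin.insertNth_zero' z.1 z.2).symm

lemma me_cons {E : Type*} [MeasurableSpace E] (n : ℕ) :
    MeasurableEmbedding (fun z : E × (Fin n → E) => (Fin.cons z.1 z.2 : Fin (n+1) → E)) := by
  have := (MeasurableEquiv.piFinSuccAbove (fun _ : Fin (n+1) => E) 0).symm.measurableEmbedding
  convert this using 1
  funext z
  exact (Fin.insertNth_zero' z.1 z.2).symm

lemma fisher_eq (d n : ℕ) (ν γ : ℝ) (F : (Fin (n+1) → Euc d) → ℝ)
    (hF : IsSymDensity d (n+1) F) :
    fisherInfo d (n+1) ν γ F = ∫⁻ V' : Fin n → Euc d, JJ d ν γ (fun x => F (Fin.cons x V')) := by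
  have hFm : Measurable F := hF.1.1
  have jm : Measurable (jap : Euc d → ℝ) := jap_cont.measurable
  have hterm : ∀ i : Fin (n+1), (∫⁻ V : Fin (n+1) → Euc d, ∫⁻ w : Euc d,
    ENNReal.ofReal ((jap (V i) ^ (γ/2) * Real.sqrt (F V)
      - jap w ^ (γ/2) * Real.sqrt (F (Function.update V i w)))^2
      / ‖V i - w‖ ^ ((d : ℝ) + ν))) = ∫⁻ V : Fin (n+1) → Euc d, ∫⁻ w : Euc d,
    ENNReal.ofReal ((jap (V 0) ^ (γ/2) * Real.sqrt (F V)
      - jap w ^ (γ/2) * Real.sqrt (F (Function.update V 0 w)))^2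
      / ‖V 0 - w‖ ^ ((d : ℝ) + ν)) := by
    intro i
    have mp := volume_measurePreserving_piCongrLeft (fun _ : Fin (n+1) => Euc d) (Equiv.swap 0 i)
    rw [← mp.lintegral_comp_emb (MeasurableEquiv.measurableEmbedding _)]
    refine lintegral_congr fun V => lintegral_congr fun w => ?_
    have e : (MeasurableEquiv.piCongrLeft (fun _ : Fin (n+1) => Euc d) (Equiv.swap 0 i)) V
        = V ∘ (Equiv.swap 0 i) := by
      ext1 k
      have := Equiv.piCongrLeft_apply_apply (fun _ : Fin (n+1) => Euc d) (Equiv.swap 0 i) V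
        ((Equiv.swap 0 i) k)
      rw [MeasurableEquiv.coe_piCongrLeft]
      simpa using this
    rw [e]
    have e2 : Function.update (V ∘ (Equiv.swap 0 i)) i w
        = Function.update V 0 w ∘ (Equiv.swap 0 i) := by
      rw [Function.update_comp_equiv]; simp
    rw [e2, hF.2, hF.2]
    simp
  unfold fisherInfo
  rw [Finset.sum_congr rfl (fun i _ => hterm i)]
  rw [Finset.sum_const, Finset.card_univ, Fintype.card_fin, nsmul_eq_mul, ← mul_assoc,
    ENNReal.inv_mul_cancel (by simp) (by simp), one_mul]
  have mp := mp_cons (volume : Measure (Euc d)) n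
  rw [← volume_pi, ← volume_pi] at mp
  rw [← mp.lintegral_comp_emb (me_cons n)]
  simp only [Fin.cons_zero, Fin.update_cons_zero]
  rw [lintegral_prod_symm]
  · rfl
  · have mc : Measurable (fun z : Euc d × (Fin n → Euc d) => (Fin.cons z.1 z.2 : Fin (n+1) → Euc d)) :=
      (me_cons n).measurable
    refine Measurable.aemeasurable ?_
    refine Measurable.lintegral_prod_right' (f := fun q : (Euc d × (Fin n → Euc d)) × Euc d =>
      ENNReal.ofReal ((jap q.1.1 ^ (γ/2) * Real.sqrt (F (Fin.cons q.1.1 q.1.2))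
      - jap q.2 ^ (γ/2) * Real.sqrt (F (Fin.cons q.2 q.1.2)))^2
      / ‖q.1.1 - q.2‖ ^ ((d : ℝ) + ν))) ?_
    have m1 : Measurable (fun q : (Euc d × (Fin n → Euc d)) × Euc d => F (Fin.cons q.1.1 q.1.2)) :=
      hFm.comp (mc.comp measurable_fst)
    have m2 : Measurable (fun q : (Euc d × (Fin n → Euc d)) × Euc d => F (Fin.cons q.2 q.1.2)) :=
      hFm.comp (mc.comp (f := fun q : (Euc d × (Fin n → Euc d)) × Euc d => (q.2, q.1.2))
        (by fun_prop))
    have m3 : Measurable (fun q : (Euc d × (Fin n → Euc d)) × Euc d => jap q.1.1) :=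
      jm.comp (measurable_fst.comp measurable_fst)
    have m4 : Measurable (fun q : (Euc d × (Fin n → Euc d)) × Euc d => jap q.2) :=
      jm.comp measurable_snd
    fun_prop

lemma integrable_dens {α : Type*} [MeasureSpace α] {f : α → ℝ} (h : IsProbDensity f) :
    Integrable f := by
  refine ⟨h.1.aestronglyMeasurable, ?_⟩
  rw [hasFiniteIntegral_iff_ofReal (Filter.Eventually.of_forall h.2.1), h.2.2]
  simp

lemma lower_N (d n : ℕ) (ν γ : ℝ) (F : (Fin (n+1) → Euc d) → ℝ)
    (hF : IsSymDensity d (n+1) F) {ι : Type*} [Fintype ι]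
    (h : ι → BoundedContinuousFunction (Euc d) ℝ) (hh : ∀ m, Good d ν γ (h m))
    (w : ι → (Fin n → Euc d) → ℝ) (hwm : ∀ m, Measurable (w m)) (hw0 : ∀ m v, 0 ≤ w m v)
    (hw1 : ∀ v, ∑ m, w m v = 1) :
    ENNReal.ofReal (∫ V, (∑ m, w m (Fin.tail V) * h m (V 0)) * F V) ≤ fisherInfo d (n+1) ν γ F := by
  have hFm : Measurable F := hF.1.1
  have mp := mp_cons (volume : Measure (Euc d)) n
  rw [← volume_pi, ← volume_pi] at mp
  have hInteg : Integrable (fun z : Euc d × (Fin n → Euc d) => F (Fin.cons z.1 z.2))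
      (volume.prod volume) := (mp.integrable_comp_emb (me_cons n)).2 (integrable_dens hF.1)
  have hmw : ∀ m, Integrable (fun z : Euc d × (Fin n → Euc d) =>
      w m z.2 * (h m z.1 * F (Fin.cons z.1 z.2))) (volume.prod volume) := by
    intro m
    have : Integrable (fun z : Euc d × (Fin n → Euc d) =>
      (w m z.2 * h m z.1) * F (Fin.cons z.1 z.2)) (volume.prod volume) := by
      refine hInteg.bdd_mul (c := ‖h m‖) ?_ ?_
      · have := (h m).continuous.measurable
        have := hwm m
        exact Measurable.aestronglyMeasurable (by fun_prop)
      · refine Filter.Eventually.of_forall fun z => ?_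
        rw [norm_mul]
        have h1 : ‖w m z.2‖ ≤ 1 := by
          rw [Real.norm_of_nonneg (hw0 _ _), ← hw1 z.2]
          exact Finset.single_le_sum (f := fun m => w m z.2) (fun i _ => hw0 i _) (Finset.mem_univ m)
        calc _ ≤ 1 * ‖h m‖ := mul_le_mul h1 ((h m).norm_coe_le_norm _) (norm_nonneg _) zero_le_one
          _ = _ := one_mul _
    simpa only [mul_assoc] using this
  rw [fisher_eq d n ν γ F hF, ← mp.integral_comp (me_cons n)]
  simp only [Fin.tail_cons, Fin.cons_zero]
  rw [integral_prod_symm]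
  swap
  · simp only [Finset.sum_mul, mul_assoc]
    exact integrable_finsetSum _ fun m _ => hmw m
  refine (ofReal_integral_le' _ _).trans ?_
  refine lintegral_mono_ae ?_
  filter_upwards [hInteg.prod_left_ae] with V' hV'
  have e : ∀ m, Integrable (fun x => w m V' * h m x * F (Fin.cons x V')) := by
    intro m
    refine hV'.bdd_mul (c := ‖w m V'‖ * ‖h m‖) ?_ ?_
    · exact (Continuous.aestronglyMeasurable (by have := (h m).continuous; fun_prop))
    · refine Filter.Eventually.of_forall fun x => ?_
      rw [norm_mul]
      gcongr
      exact (h m).norm_coe_le_norm _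
  simp only [Finset.sum_mul]
  rw [integral_finsetSum _ (fun m _ => e m)]
  have hG : Measurable (fun x => F (Fin.cons x V')) :=
    hFm.comp ((me_cons n).measurable.comp (f := fun x : Euc d => (x, V')) (by fun_prop))
  calc ENNReal.ofReal (∑ m, ∫ x, w m V' * h m x * F (Fin.cons x V'))
      ≤ ∑ m, ENNReal.ofReal (∫ x, w m V' * h m x * F (Fin.cons x V')) := by
        exact Finset.le_sum_of_subadditive _ ENNReal.ofReal_zero.le (fun a b => ENNReal.ofReal_add_le) _ _
    _ = ∑ m, ENNReal.ofReal (w m V') * ENNReal.ofReal (∫ x, h m x * F (Fin.cons x V')) := by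
        refine Finset.sum_congr rfl fun m _ => ?_
        rw [← ENNReal.ofReal_mul (hw0 _ _), ← integral_const_mul]
        simp only [mul_assoc]
    _ ≤ ∑ m, ENNReal.ofReal (w m V') * JJ d ν γ (fun x => F (Fin.cons x V')) := by
        gcongr with m
        exact hh m _ hG (fun x => hF.1.2.1 _) hV'
    _ = JJ d ν γ (fun x => F (Fin.cons x V')) := by
        rw [← Finset.sum_mul, ← ENNReal.ofReal_sum_of_nonneg (fun m _ => hw0 _ _), hw1]
        simp

/-- maximum of finitely many reals -/
def mx {M : ℕ} (a : Fin (M+1) → ℝ) : ℝ := Finset.univ.sup' Finset.univ_nonempty a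

lemma le_mx {M : ℕ} (a : Fin (M+1) → ℝ) (m) : a m ≤ mx a :=
  Finset.le_sup' a (Finset.mem_univ m)

lemma mx_le {M : ℕ} {a : Fin (M+1) → ℝ} {c : ℝ} (h : ∀ m, a m ≤ c) : mx a ≤ c :=
  Finset.sup'_le _ _ (fun m _ => h m)

lemma mx_mem {M : ℕ} (a : Fin (M+1) → ℝ) : ∃ m, mx a = a m := by
  obtain ⟨m, _, h⟩ := Finset.exists_mem_eq_sup' (Finset.univ_nonempty) a
  exact ⟨m, h⟩

lemma mx_cont {M : ℕ} : Continuous (mx : (Fin (M+1) → ℝ) → ℝ) := by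
  unfold mx
  exact Continuous.finset_sup'_apply _ (fun i _ => continuous_apply i)

def sel {M : ℕ} (ε : ℝ) (a : Fin (M+1) → ℝ) (m : Fin (M+1)) : ℝ :=
  max 0 (a m - mx a + ε) / ∑ k, max 0 (a k - mx a + ε)

lemma sel_den {M : ℕ} {ε : ℝ} (hε : 0 < ε) (a : Fin (M+1) → ℝ) :
    0 < ∑ k, max 0 (a k - mx a + ε) := by
  obtain ⟨m, hm⟩ := mx_mem a
  refine Finset.sum_pos' (fun i _ => le_max_left _ _) ⟨m, Finset.mem_univ m, ?_⟩
  rw [hm]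
  simp [hε]

lemma sel_nonneg {M : ℕ} {ε : ℝ} (hε : 0 < ε) (a : Fin (M+1) → ℝ) (m) : 0 ≤ sel ε a m :=
  div_nonneg (le_max_left _ _) (sel_den hε a).le

lemma sel_sum {M : ℕ} {ε : ℝ} (hε : 0 < ε) (a : Fin (M+1) → ℝ) : ∑ m, sel ε a m = 1 := by
  unfold sel
  rw [← Finset.sum_div, div_self (sel_den hε a).ne']

lemma sel_le_one {M : ℕ} {ε : ℝ} (hε : 0 < ε) (a : Fin (M+1) → ℝ) (m) : sel ε a m ≤ 1 := by
  rw [← sel_sum hε a]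
  exact Finset.single_le_sum (f := sel ε a) (fun i _ => sel_nonneg hε a i) (Finset.mem_univ m)

lemma sel_cont {M : ℕ} {ε : ℝ} (hε : 0 < ε) (m : Fin (M+1)) : Continuous (fun a => sel ε a m) := by
  unfold sel
  have := mx_cont (M := M)
  refine Continuous.div (by fun_prop) (by fun_prop) (fun a => (sel_den hε a).ne')

lemma sel_lower {M : ℕ} {ε : ℝ} (hε : 0 < ε) (a b : Fin (M+1) → ℝ) :
    mx b - ε - 2 * ∑ k, |a k - b k| ≤ ∑ m, sel ε a m * b m := by
  have hS : ∀ m, |a m - b m| ≤ ∑ k, |a k - b k| := fun m =>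
    Finset.single_le_sum (f := fun k => |a k - b k|) (fun i _ => abs_nonneg _) (Finset.mem_univ m)
  have hmx : mx b ≤ mx a + ∑ k, |a k - b k| := by
    refine mx_le fun m => ?_
    have h1 := le_mx a m
    have h2 := hS m
    have h3 := neg_abs_le (a m - b m)
    linarith
  calc mx b - ε - 2 * ∑ k, |a k - b k|
      = ∑ m, sel ε a m * (mx b - ε - 2 * ∑ k, |a k - b k|) := by
        rw [← Finset.sum_mul, sel_sum hε, one_mul]
    _ ≤ _ := by
        refine Finset.sum_le_sum fun m _ => ?_
        by_cases h : a m - mx a + ε ≤ 0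
        · have : sel ε a m = 0 := by
            unfold sel; rw [max_eq_left h, zero_div]
          simp [this]
        · refine mul_le_mul_of_nonneg_left ?_ (sel_nonneg hε a m)
          push Not at h
          have h2 := hS m
          have h3 := le_abs_self (a m - b m)
          linarith

/-- empirical average -/
def avg {E : Type*} (r : ℕ) (h : E → ℝ) (v : Fin r → E) : ℝ := (r : ℝ)⁻¹ * ∑ i, h (v i)

lemma avg_cont {E : Type*} [TopologicalSpace E] (r : ℕ) {h : E → ℝ} (hh : Continuous h) :
    Continuous (avg r h) := by
  unfold avg; fun_prop

lemma abs_avg_le {E : Type*} [TopologicalSpace E] (r : ℕ) (hr : 0 < r)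
    (h : BoundedContinuousFunction E ℝ) (v : Fin r → E) : |avg r h v| ≤ ‖h‖ := by
  unfold avg
  rw [abs_mul, abs_of_nonneg (by positivity)]
  have hr' : (0:ℝ) < r := by exact_mod_cast hr
  calc (r:ℝ)⁻¹ * |∑ i, h (v i)| ≤ (r:ℝ)⁻¹ * ∑ i : Fin r, ‖h‖ := by
        gcongr
        refine (Finset.abs_sum_le_sum_abs _ _).trans (Finset.sum_le_sum fun i _ => ?_)
        exact h.norm_coe_le_norm _
    _ = ‖h‖ := by simp; field_simp

lemma lln {E : Type*} [TopologicalSpace E] [MeasurableSpace E] [BorelSpace E]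
    [SecondCountableTopology E] (ρ : Measure E) [IsProbabilityMeasure ρ]
    (h : BoundedContinuousFunction E ℝ) (r : ℕ) (hr : 0 < r) (δ : ℝ) (hδ : 0 < δ) :
    ∫ v, |avg r h v - ∫ x, h x ∂ρ| ∂(Measure.pi fun _ : Fin r => ρ) ≤ δ + ‖h‖^2 / r / δ := by
  have hr' : (0:ℝ) < r := by exact_mod_cast hr
  set H := ∫ x, h x ∂ρ
  set P := Measure.pi fun _ : Fin r => ρ
  have hc := avg_cont r h.continuous
  have hm : MemLp h 2 ρ := MemLp.of_bound h.continuous.aestronglyMeasurable ‖h‖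
    (Filter.Eventually.of_forall fun x => h.norm_coe_le_norm x)
  have hma : MemLp (avg r h) 2 P := MemLp.of_bound hc.aestronglyMeasurable ‖h‖
    (Filter.Eventually.of_forall fun x => abs_avg_le r hr h x)
  have hInteg : Integrable (avg r h) P := hma.integrable (by norm_num)
  have hmean : ∫ v, avg r h v ∂P = H := by
    unfold avg
    rw [integral_const_mul, integral_finsetSum]
    · have : ∀ i : Fin r, ∫ v, h (v i) ∂P = H := by
        intro i
        exact integral_comp_eval (μ := fun _ : Fin r => ρ) (i := i) h.continuous.aestronglyMeasurable
      simp only [this]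
      simp; field_simp
    · intro i _
      exact (Integrable.of_bound (h.continuous.comp (continuous_apply i)).aestronglyMeasurable ‖h‖
        (Filter.Eventually.of_forall fun x => h.norm_coe_le_norm _))
  have hvar : ProbabilityTheory.variance (avg r h) P ≤ ‖h‖^2 / r := by
    have e : avg r h = fun v => (r:ℝ)⁻¹ * (∑ i : Fin r, fun v : Fin r → E => h (v i)) v := by
      funext v; simp [avg]
    rw [e, ProbabilityTheory.variance_const_mul, ProbabilityTheory.variance_sum_pi (fun _ => hm)]
    have hv : ProbabilityTheory.variance h ρ ≤ ‖h‖^2 := by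
      refine (ProbabilityTheory.variance_le_expectation_sq h.continuous.aestronglyMeasurable).trans ?_
      have : ∫ x, (h ^ 2 : E → ℝ) x ∂ρ ≤ ∫ x, ‖h‖^2 ∂ρ := by
        refine integral_mono_of_nonneg (Filter.Eventually.of_forall fun x => by simp; positivity)
          (integrable_const _) (Filter.Eventually.of_forall fun x => ?_)
        simp only [Pi.pow_apply]
        have := h.norm_coe_le_norm x
        rw [Real.norm_eq_abs] at this
        rw [← sq_abs (h x)]
        exact pow_le_pow_left₀ (abs_nonneg _) this 2
      simpa using this
    simp only [Finset.sum_const, Finset.card_univ, Fintype.card_fin, nsmul_eq_mul]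
    calc _ = ProbabilityTheory.variance h ρ / r := by field_simp
      _ ≤ _ := by gcongr
  rw [ProbabilityTheory.variance_eq_integral hc.measurable.aemeasurable, hmean] at hvar
  have hsq : Integrable (fun v => (avg r h v - H)^2) P :=
    (hma.sub (memLp_const H)).integrable_sq
  calc ∫ v, |avg r h v - H| ∂P ≤ ∫ v, (δ + (avg r h v - H)^2 / δ) ∂P := by
        refine integral_mono (hInteg.sub (integrable_const H)).abs
          ((integrable_const δ).add (hsq.div_const δ)) fun v => ?_
        simp only
        have : |avg r h v - H| * δ ≤ δ * δ + (avg r h v - H)^2 := by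
          rw [← sq_abs (avg r h v - H)]
          nlinarith [sq_nonneg (|avg r h v - H| - δ), abs_nonneg (avg r h v - H)]
        calc _ = |avg r h v - H| * δ / δ := by field_simp
          _ ≤ (δ * δ + (avg r h v - H)^2) / δ := by gcongr
          _ = _ := by field_simp
    _ = δ + (∫ v, (avg r h v - H)^2 ∂P) / δ := by
        rw [integral_add (integrable_const δ) (hsq.div_const δ), integral_div]
        simp
    _ ≤ _ := by gcongr

/-- the test function on `E^{r+1}` -/
def phi {E : Type*} [TopologicalSpace E] {M : ℕ} (r : ℕ) (ε : ℝ)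
    (h : Fin (M+1) → BoundedContinuousFunction E ℝ) (v : Fin (r+1) → E) : ℝ :=
  ∑ m, sel ε (fun k => avg r (h k) (Fin.tail v)) m * h m (v 0)

lemma selavg_cont {E : Type*} [TopologicalSpace E] {M : ℕ} (r : ℕ) {ε : ℝ} (hε : 0 < ε)
    (h : Fin (M+1) → BoundedContinuousFunction E ℝ) (m) :
    Continuous (fun v : Fin r → E => sel ε (fun k => avg r (h k) v) m) :=
  (sel_cont hε m).comp (continuous_pi fun k => avg_cont r (h k).continuous)

lemma phi_cont {E : Type*} [TopologicalSpace E] {M : ℕ} (r : ℕ) {ε : ℝ} (hε : 0 < ε)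
    (h : Fin (M+1) → BoundedContinuousFunction E ℝ) : Continuous (phi r ε h) := by
  unfold phi
  refine continuous_finsetSum _ fun m _ => ?_
  refine Continuous.mul ?_ ((h m).continuous.comp (continuous_apply 0))
  refine (selavg_cont r hε h m).comp ?_
  unfold Fin.tail
  fun_prop

lemma phi_bound {E : Type*} [TopologicalSpace E] {M : ℕ} (r : ℕ) {ε : ℝ} (hε : 0 < ε)
    (h : Fin (M+1) → BoundedContinuousFunction E ℝ) (v) : ‖phi r ε h v‖ ≤ ∑ m, ‖h m‖ := by
  unfold phi
  refine (norm_sum_le _ _).trans (Finset.sum_le_sum fun m _ => ?_)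
  rw [norm_mul, Real.norm_of_nonneg (sel_nonneg hε _ m)]
  calc _ ≤ 1 * ‖h m‖ := mul_le_mul (sel_le_one hε _ m) ((h m).norm_coe_le_norm _)
        (norm_nonneg _) zero_le_one
    _ = _ := one_mul _

def phiB {E : Type*} [TopologicalSpace E] {M : ℕ} (r : ℕ) {ε : ℝ} (hε : 0 < ε)
    (h : Fin (M+1) → BoundedContinuousFunction E ℝ) :
    BoundedContinuousFunction (Fin (r+1) → E) ℝ :=
  BoundedContinuousFunction.ofNormedAddCommGroup (phi r ε h) (phi_cont r hε h) _ (phi_bound r hε h)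

lemma phi_lower {E : Type*} [TopologicalSpace E] [MeasurableSpace E] [BorelSpace E]
    [SecondCountableTopology E] (ρ : Measure E) [IsProbabilityMeasure ρ] {M : ℕ}
    (h : Fin (M+1) → BoundedContinuousFunction E ℝ) (r : ℕ) (hr : 0 < r) {ε : ℝ} (hε : 0 < ε)
    (δ : ℝ) (hδ : 0 < δ) :
    mx (fun m => ∫ x, h m x ∂ρ) - ε - 2 * ∑ m, (δ + ‖h m‖^2 / r / δ)
      ≤ ∫ v, phi r ε h v ∂(Measure.pi fun _ : Fin (r+1) => ρ) := by
  have mp := mp_cons ρ r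
  have hi : Integrable (phi r ε h) (Measure.pi fun _ : Fin (r+1) => ρ) :=
    Integrable.of_bound (phi_cont r hε h).aestronglyMeasurable _
      (Filter.Eventually.of_forall (phi_bound r hε h))
  rw [← mp.integral_comp (me_cons r), integral_prod_symm (fun z : E × (Fin r → E) => phi r ε h (Fin.cons z.1 z.2)) ((mp.integrable_comp_emb (me_cons r)).2 hi)]
  set P := Measure.pi fun _ : Fin r => ρ
  have hin : ∀ v' : Fin r → E, ∫ x, phi r ε h (Fin.cons x v') ∂ρ
      = ∑ m, sel ε (fun k => avg r (h k) v') m * ∫ x, h m x ∂ρ := by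
    intro v'
    simp only [phi, Fin.tail_cons, Fin.cons_zero]
    rw [integral_finsetSum]
    · simp only [integral_const_mul]
    · intro m _
      exact ((h m).integrable ρ).const_mul _
  simp only [hin]
  have hai : ∀ k, Integrable (fun v => |avg r (h k) v - ∫ x, h k x ∂ρ|) P := by
    intro k
    refine Integrable.abs ?_
    refine Integrable.sub ?_ (integrable_const _)
    exact Integrable.of_bound (avg_cont r (h k).continuous).aestronglyMeasurable ‖h k‖
      (Filter.Eventually.of_forall fun x => abs_avg_le r hr (h k) x)
  calc _ ≤ mx (fun m => ∫ x, h m x ∂ρ) - ε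
        - 2 * ∑ m, ∫ v, |avg r (h m) v - ∫ x, h m x ∂ρ| ∂P := by
        gcongr with m
        exact lln ρ (h m) r hr δ hδ
    _ = ∫ v, (mx (fun m => ∫ x, h m x ∂ρ) - ε
        - 2 * ∑ m, |avg r (h m) v - ∫ x, h m x ∂ρ|) ∂P := by
        rw [integral_sub (integrable_const _) ((integrable_finsetSum _ fun k _ => hai k).const_mul 2),
          integral_const_mul, integral_finsetSum _ fun k _ => hai k]
        simp
    _ ≤ _ := by
        refine integral_mono ((integrable_const _).sub
          ((integrable_finsetSum _ fun k _ => hai k).const_mul 2)) ?_ fun v => ?_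
        · refine integrable_finsetSum _ fun m _ => Integrable.mul_const ?_ _
          refine Integrable.of_bound (selavg_cont r hε h m).aestronglyMeasurable 1
            (Filter.Eventually.of_forall fun v => ?_)
          rw [Real.norm_of_nonneg (sel_nonneg hε _ m)]
          exact sel_le_one hε _ m
        · exact sel_lower hε _ _

instance pm_borel_space {α : Type*} [MeasurableSpace α] [TopologicalSpace α]
    [OpensMeasurableSpace α] : BorelSpace (ProbabilityMeasure α) := ⟨rfl⟩

lemma limit_lower (d : ℕ) (ν γ : ℝ)
    (F : (N : ℕ) → (Fin N → Euc d) → ℝ)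
    (hF : ∀ N, 2 ≤ N → IsSymDensity d N (F N))
    (π : Measure (ProbabilityMeasure (Euc d))) (hπ : IsProbabilityMeasure π)
    (hconv : ∀ j : ℕ, 2 ≤ j → ∀ φ : BoundedContinuousFunction (Fin j → Euc d) ℝ,
      Filter.Tendsto
        (fun N => ∫ V : Fin N → Euc d,
          φ (fun i : Fin j => if h : (i : ℕ) < N then V ⟨i, h⟩ else 0) * F N V)
        Filter.atTop
        (nhds (∫ ρ : ProbabilityMeasure (Euc d),
          (∫ x, φ x ∂(Measure.pi (fun _ : Fin j => (ρ : Measure (Euc d))))) ∂π)))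
    {M : ℕ} (h : Fin (M+1) → BoundedContinuousFunction (Euc d) ℝ) (hh : ∀ m, Good d ν γ (h m)) :
    ENNReal.ofReal (∫ ρ : ProbabilityMeasure (Euc d),
      mx (fun m => ∫ x, h m x ∂(ρ : Measure (Euc d))) ∂π)
      ≤ Filter.liminf (fun N => fisherInfo d N ν γ (F N)) Filter.atTop := by
  have hmxc : Continuous (fun ρ : ProbabilityMeasure (Euc d) =>
      mx (fun m => ∫ x, h m x ∂(ρ : Measure (Euc d)))) :=
    mx_cont.comp (continuous_pi fun m =>
      ProbabilityMeasure.continuous_integral_boundedContinuousFunction (h m))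
  have hHb : ∀ (ρ : ProbabilityMeasure (Euc d)) m, |∫ x, h m x ∂(ρ : Measure (Euc d))| ≤ ‖h m‖ := by
    intro ρ m
    have := norm_integral_le_of_norm_le_const (μ := (ρ : Measure (Euc d)))
      (Filter.Eventually.of_forall fun x => (h m).norm_coe_le_norm x)
    simpa using this
  have hmxi : Integrable (fun ρ : ProbabilityMeasure (Euc d) =>
      mx (fun m => ∫ x, h m x ∂(ρ : Measure (Euc d)))) π := by
    refine Integrable.of_bound hmxc.measurable.aestronglyMeasurable (∑ m, ‖h m‖)
      (Filter.Eventually.of_forall fun ρ => ?_)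
    obtain ⟨m, hm⟩ := mx_mem (fun m => ∫ x, h m x ∂(ρ : Measure (Euc d)))
    rw [hm]
    exact (hHb ρ m).trans (Finset.single_le_sum (f := fun m => ‖h m‖) (fun i _ => norm_nonneg _)
      (Finset.mem_univ m))
  -- main quantitative bound
  have key : ∀ (r : ℕ) (hr : 0 < r) (ε : ℝ) (hε : 0 < ε) (δ : ℝ) (hδ : 0 < δ),
      ENNReal.ofReal ((∫ ρ : ProbabilityMeasure (Euc d),
        mx (fun m => ∫ x, h m x ∂(ρ : Measure (Euc d))) ∂π)
          - (ε + 2 * ∑ m, (δ + ‖h m‖^2 / r / δ)))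
        ≤ Filter.liminf (fun N => fisherInfo d N ν γ (F N)) Filter.atTop := by
    intro r hr ε hε δ hδ
    have hc := hconv (r+1) (by omega) (phiB r hε h)
    set X : ProbabilityMeasure (Euc d) → ℝ := fun ρ =>
      ∫ x, phiB r hε h x ∂(Measure.pi (fun _ : Fin (r+1) => (ρ : Measure (Euc d)))) with hX
    have hXc : Continuous X := by
      have h1 := ProbabilityMeasure.continuous_integral_boundedContinuousFunction (phiB r hε h)
      have h2 := ProbabilityMeasure.continuous_pi (ι := Fin (r+1)) (α := fun _ => Euc d)
      have h3 : Continuous (fun ρ : ProbabilityMeasure (Euc d) => fun _ : Fin (r+1) => ρ) := by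
        fun_prop
      exact h1.comp (h2.comp h3)
    have hXi : Integrable X π := by
      refine Integrable.of_bound hXc.measurable.aestronglyMeasurable ‖phiB r hε h‖
        (Filter.Eventually.of_forall fun ρ => ?_)
      have := norm_integral_le_of_norm_le_const
        (μ := (Measure.pi (fun _ : Fin (r+1) => (ρ : Measure (Euc d)))))
        (Filter.Eventually.of_forall fun x => (phiB r hε h).norm_coe_le_norm x)
      simpa using this
    have h1 : (∫ ρ : ProbabilityMeasure (Euc d),
        mx (fun m => ∫ x, h m x ∂(ρ : Measure (Euc d))) ∂π)
          - (ε + 2 * ∑ m, (δ + ‖h m‖^2 / r / δ)) ≤ ∫ ρ, X ρ ∂π := by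
      have e : (∫ ρ : ProbabilityMeasure (Euc d),
          mx (fun m => ∫ x, h m x ∂(ρ : Measure (Euc d))) ∂π)
          - (ε + 2 * ∑ m, (δ + ‖h m‖^2 / r / δ)) = ∫ ρ : ProbabilityMeasure (Euc d),
          (mx (fun m => ∫ x, h m x ∂(ρ : Measure (Euc d)))
          - (ε + 2 * ∑ m, (δ + ‖h m‖^2 / r / δ))) ∂π := by
        rw [integral_sub hmxi (integrable_const _)]; simp
      rw [e]
      refine integral_mono (hmxi.sub (integrable_const _)) hXi fun ρ => ?_
      have := phi_lower (ρ : Measure (Euc d)) h r hr hε δ hδ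
      rw [sub_sub] at this
      exact this
    refine (ENNReal.ofReal_le_ofReal h1).trans ?_
    have h2 := (ENNReal.continuous_ofReal.tendsto _).comp hc
    rw [← h2.liminf_eq]
    refine Filter.liminf_le_liminf ?_
    filter_upwards [Filter.eventually_ge_atTop 2] with N hN
    obtain ⟨n, rfl⟩ : ∃ n, N = n + 1 := ⟨N - 1, by omega⟩
    have hw := lower_N d n ν γ (F (n+1)) (hF _ hN) h hh
      (fun m V' => sel ε (fun k => avg r (h k)
        (fun i : Fin r => if hi : (i:ℕ) + 1 < n + 1 then V' ⟨i, by omega⟩ else 0)) m)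
      ?_ (fun m v => sel_nonneg hε _ m) (fun v => sel_sum hε _)
    · exact hw
    · intro m
      refine (selavg_cont r hε h m).measurable.comp ?_
      refine measurable_pi_lambda _ fun i => ?_
      by_cases hi : (i:ℕ) + 1 < n + 1
      · simp only [hi, dif_pos]; exact measurable_pi_apply _
      · simp only [hi, dif_neg, not_false_eq_true]; exact measurable_const
  -- let the parameters go to their limits
  have ht : Filter.Tendsto (fun k : ℕ => ((k : ℝ) + 1)⁻¹) Filter.atTop (nhds 0) := by
    simpa using tendsto_one_div_add_atTop_nhds_zero_nat (𝕜 := ℝ)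
  have hlim : Filter.Tendsto (fun k : ℕ => ENNReal.ofReal ((∫ ρ : ProbabilityMeasure (Euc d),
        mx (fun m => ∫ x, h m x ∂(ρ : Measure (Euc d))) ∂π)
          - (((k : ℝ) + 1)⁻¹ + 2 * ∑ m, (((k : ℝ) + 1)⁻¹ + ‖h m‖^2 * ((k : ℝ) + 1)⁻¹))))
      Filter.atTop (nhds (ENNReal.ofReal (∫ ρ : ProbabilityMeasure (Euc d),
        mx (fun m => ∫ x, h m x ∂(ρ : Measure (Euc d))) ∂π))) := by
    refine (ENNReal.continuous_ofReal.tendsto _).comp ?_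
    have hcont : Continuous (fun t : ℝ => (∫ ρ : ProbabilityMeasure (Euc d),
        mx (fun m => ∫ x, h m x ∂(ρ : Measure (Euc d))) ∂π)
          - (t + 2 * ∑ m, (t + ‖h m‖^2 * t))) := by fun_prop
    have := (hcont.tendsto 0).comp ht
    simp only [mul_zero, add_zero, Finset.sum_const_zero, sub_zero] at this
    exact this
  refine le_of_tendsto' hlim fun k => ?_
  have := key ((k+1)^2) (by positivity) ((k:ℝ)+1)⁻¹ (by positivity) ((k:ℝ)+1)⁻¹ (by positivity)
  have hk : (k:ℝ) + 1 ≠ 0 := by positivity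
  have e : ∀ m, ‖h m‖^2 / (((k+1)^2 : ℕ) : ℝ) / ((k:ℝ)+1)⁻¹ = ‖h m‖^2 * ((k : ℝ) + 1)⁻¹ := by
    intro m
    push_cast
    field_simp
  simp only [e] at this
  exact this

lemma sup_lower (d : ℕ) (ν γ : ℝ)
    (F : (N : ℕ) → (Fin N → Euc d) → ℝ)
    (hF : ∀ N, 2 ≤ N → IsSymDensity d N (F N))
    (π : Measure (ProbabilityMeasure (Euc d))) (hπ : IsProbabilityMeasure π)
    (hconv : ∀ j : ℕ, 2 ≤ j → ∀ φ : BoundedContinuousFunction (Fin j → Euc d) ℝ,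
      Filter.Tendsto
        (fun N => ∫ V : Fin N → Euc d,
          φ (fun i : Fin j => if h : (i : ℕ) < N then V ⟨i, h⟩ else 0) * F N V)
        Filter.atTop
        (nhds (∫ ρ : ProbabilityMeasure (Euc d),
          (∫ x, φ x ∂(Measure.pi (fun _ : Fin j => (ρ : Measure (Euc d))))) ∂π)))
    (h : ℕ → BoundedContinuousFunction (Euc d) ℝ) (h0 : h 0 = 0) (hh : ∀ m, Good d ν γ (h m)) :
    ∫⁻ ρ : ProbabilityMeasure (Euc d), ⨆ m, ENNReal.ofReal (∫ x, h m x ∂(ρ : Measure (Euc d))) ∂π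
      ≤ Filter.liminf (fun N => fisherInfo d N ν γ (F N)) Filter.atTop := by
  have hmxc : ∀ M : ℕ, Continuous (fun ρ : ProbabilityMeasure (Euc d) =>
      mx (fun m : Fin (M+1) => ∫ x, h m x ∂(ρ : Measure (Euc d)))) := fun M =>
    mx_cont.comp (continuous_pi fun m =>
      ProbabilityMeasure.continuous_integral_boundedContinuousFunction (h m))
  have hnn : ∀ (M : ℕ) (ρ : ProbabilityMeasure (Euc d)),
      0 ≤ mx (fun m : Fin (M+1) => ∫ x, h m x ∂(ρ : Measure (Euc d))) := by
    intro M ρ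
    have := le_mx (fun m : Fin (M+1) => ∫ x, h m x ∂(ρ : Measure (Euc d))) 0
    simpa [h0] using this
  have e : ∀ ρ : ProbabilityMeasure (Euc d),
      (⨆ m, ENNReal.ofReal (∫ x, h m x ∂(ρ : Measure (Euc d))))
      ≤ ⨆ M : ℕ, ENNReal.ofReal (mx (fun m : Fin (M+1) => ∫ x, h m x ∂(ρ : Measure (Euc d)))) := by
    intro ρ
    refine iSup_mono fun m => ENNReal.ofReal_le_ofReal ?_
    exact le_mx (fun k : Fin (m+1) => ∫ x, h k x ∂(ρ : Measure (Euc d))) (Fin.last m)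
  refine (lintegral_mono e).trans ?_
  rw [lintegral_iSup]
  · refine iSup_le fun M => ?_
    rw [← ofReal_integral_eq_lintegral_ofReal]
    · exact limit_lower d ν γ F hF π hπ hconv (fun m : Fin (M+1) => h m) (fun m => hh m)
    · refine Integrable.of_bound (hmxc M).measurable.aestronglyMeasurable
        (∑ m : Fin (M+1), ‖h m‖) (Filter.Eventually.of_forall fun ρ => ?_)
      rw [Real.norm_of_nonneg (hnn M ρ)]
      refine mx_le fun m => ?_
      have := norm_integral_le_of_norm_le_const (μ := (ρ : Measure (Euc d)))
        (Filter.Eventually.of_forall fun x => (h m).norm_coe_le_norm x)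
      refine (le_abs_self _).trans (le_trans (by simpa using this) (Finset.single_le_sum
        (f := fun m : Fin (M+1) => ‖h m‖) (fun i _ => norm_nonneg _) (Finset.mem_univ m)))
    · exact Filter.Eventually.of_forall fun ρ => hnn M ρ
  · intro M
    exact ((hmxc M).measurable).ennreal_ofReal
  · intro M M' hMM ρ
    refine ENNReal.ofReal_le_ofReal (mx_le fun m => ?_)
    exact le_mx (fun k : Fin (M'+1) => ∫ x, h k x ∂(ρ : Measure (Euc d)))
      (Fin.castLE (by omega) m)

def cut {d : ℕ} (l : ℕ) (x : Euc d) : ℝ := max 0 (1 - ‖x‖ / ((l:ℝ)+1))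

def ker (d : ℕ) (ν : ℝ) (l : ℕ) (z : Euc d × Euc d) : ℝ :=
  (‖z.1 - z.2‖ / (‖z.1 - z.2‖ ^ ((d:ℝ) + ν + 1) + ((l:ℝ)+1)⁻¹)) * (cut l z.1 * cut l z.2)

def BB (d l : ℕ) : Set (Euc d) := Metric.closedBall 0 ((l:ℝ)+1)

lemma cut_nonneg {d : ℕ} (l : ℕ) (x : Euc d) : 0 ≤ cut l x := le_max_left _ _

lemma cut_le_one {d : ℕ} (l : ℕ) (x : Euc d) : cut l x ≤ 1 := by
  unfold cut
  have : 0 ≤ ‖x‖ / ((l:ℝ)+1) := by positivity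
  exact max_le zero_le_one (by linarith)

lemma cut_zero {d : ℕ} (l : ℕ) (x : Euc d) (hx : x ∉ BB d l) : cut l x = 0 := by
  unfold BB at hx
  simp only [Metric.mem_closedBall, dist_zero_right, not_le] at hx
  unfold cut
  have : 1 ≤ ‖x‖ / ((l:ℝ)+1) := by
    rw [le_div_iff₀ (by positivity)]; linarith
  exact max_eq_left (by linarith)

lemma cut_cont {d : ℕ} (l : ℕ) : Continuous (cut l : Euc d → ℝ) := by
  unfold cut; fun_prop

lemma ker_den {d : ℕ} (ν : ℝ) (l : ℕ) (z : Euc d × Euc d) :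
    0 < ‖z.1 - z.2‖ ^ ((d:ℝ) + ν + 1) + ((l:ℝ)+1)⁻¹ := by positivity

lemma ker_nonneg (d : ℕ) (ν : ℝ) (l : ℕ) (z) : 0 ≤ ker d ν l z :=
  mul_nonneg (div_nonneg (norm_nonneg _) (ker_den ν l z).le)
    (mul_nonneg (cut_nonneg _ _) (cut_nonneg _ _))

lemma ker_cont (d : ℕ) {ν : ℝ} (hν : 0 < ν) (l : ℕ) : Continuous (ker d ν l) := by
  unfold ker
  have := cut_cont (d := d) l
  refine Continuous.mul (Continuous.div (by fun_prop) ?_ fun z => (ker_den ν l z).ne') (by fun_prop)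
  refine Continuous.add ?_ continuous_const
  exact Continuous.rpow_const (by fun_prop) fun z => Or.inr (by positivity)

lemma ker_swap (d : ℕ) (ν : ℝ) (l : ℕ) (z) : ker d ν l z.swap = ker d ν l z := by
  unfold ker
  simp only [Prod.fst_swap, Prod.snd_swap]
  rw [norm_sub_rev, mul_comm (cut l z.2)]

lemma ker_zero (d : ℕ) (ν : ℝ) (l : ℕ) (z) (hz : ¬ (z.1 ∈ BB d l ∧ z.2 ∈ BB d l)) :
    ker d ν l z = 0 := by
  unfold ker
  by_cases h1 : z.1 ∈ BB d l
  · rw [cut_zero l z.2 (fun h => hz ⟨h1, h⟩)]; simp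
  · rw [cut_zero l z.1 h1]; simp

lemma ker_le (d : ℕ) {ν : ℝ} (_hν : 0 < ν) (l : ℕ) (z) :
    ker d ν l z ≤ (‖z.1 - z.2‖ ^ ((d:ℝ) + ν))⁻¹ := by
  unfold ker
  have h0 : 0 ≤ ‖z.1 - z.2‖ := norm_nonneg _
  have hc : cut l z.1 * cut l z.2 ≤ 1 :=
    mul_le_one₀ (cut_le_one _ _) (cut_nonneg _ _) (cut_le_one _ _)
  refine (mul_le_of_le_one_right (div_nonneg h0 (ker_den ν l z).le) hc).trans ?_
  rcases h0.eq_or_lt with h | h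
  · rw [← h]; simp; positivity
  · rw [div_le_iff₀ (ker_den ν l z), Real.rpow_add_one h.ne']
    have hp : 0 < ‖z.1 - z.2‖ ^ ((d:ℝ) + ν) := Real.rpow_pos_of_pos h _
    rw [mul_add, ← mul_assoc, inv_mul_cancel₀ hp.ne', one_mul]
    have : 0 ≤ (‖z.1 - z.2‖ ^ ((d:ℝ) + ν))⁻¹ * ((l:ℝ)+1)⁻¹ := by positivity
    linarith

lemma ker_tendsto (d : ℕ) {ν : ℝ} (hν : 0 < ν) (z) :
    Filter.Tendsto (fun l => ker d ν l z) Filter.atTop (nhds ((‖z.1 - z.2‖ ^ ((d:ℝ) + ν))⁻¹)) := by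
  have ht : Filter.Tendsto (fun k : ℕ => ((k : ℝ) + 1)⁻¹) Filter.atTop (nhds 0) := by
    simpa using tendsto_one_div_add_atTop_nhds_zero_nat (𝕜 := ℝ)
  have hcut : ∀ x : Euc d, Filter.Tendsto (fun l : ℕ => cut l x) Filter.atTop (nhds 1) := by
    intro x
    have hc : Continuous (fun t : ℝ => max 0 (1 - ‖x‖ * t)) := by fun_prop
    have := (hc.tendsto 0).comp ht
    simp only [mul_zero, sub_zero, zero_le_one, sup_of_le_right] at this
    exact this
  have h0 : 0 ≤ ‖z.1 - z.2‖ := norm_nonneg _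
  have hm : Filter.Tendsto (fun l : ℕ => ‖z.1 - z.2‖ / (‖z.1 - z.2‖ ^ ((d:ℝ) + ν + 1) + ((l:ℝ)+1)⁻¹))
      Filter.atTop (nhds ((‖z.1 - z.2‖ ^ ((d:ℝ) + ν))⁻¹)) := by
    rcases h0.eq_or_lt with h | h
    · rw [← h, Real.zero_rpow (by positivity : (d:ℝ) + ν ≠ 0)]; simp
    · have hp : 0 < ‖z.1 - z.2‖ ^ ((d:ℝ) + ν) := Real.rpow_pos_of_pos h _
      have e : (‖z.1 - z.2‖ ^ ((d:ℝ) + ν))⁻¹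
          = ‖z.1 - z.2‖ / (‖z.1 - z.2‖ ^ ((d:ℝ) + ν + 1) + 0) := by
        rw [Real.rpow_add_one h.ne', add_zero]; field_simp
      rw [e]
      refine Filter.Tendsto.div tendsto_const_nhds (tendsto_const_nhds.add ht) ?_
      have : 0 < ‖z.1 - z.2‖ ^ ((d:ℝ) + ν + 1) := Real.rpow_pos_of_pos h _
      linarith
  have := hm.mul ((hcut z.1).mul (hcut z.2))
  simpa [ker] using this

/-- a continuous function vanishing off `B × B` is bounded -/
lemma bdd_of_supp {d l : ℕ} {q : Euc d × Euc d → ℝ} (hq : Continuous q)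
    (h0 : ∀ z, ¬ (z.1 ∈ BB d l ∧ z.2 ∈ BB d l) → q z = 0) : ∃ C, 0 ≤ C ∧ ∀ z, |q z| ≤ C := by
  have hK : IsCompact (BB d l ×ˢ BB d l) :=
    (isCompact_closedBall _ _).prod (isCompact_closedBall _ _)
  obtain ⟨C, hC⟩ := hK.exists_bound_of_continuousOn hq.continuousOn
  refine ⟨max C 0, le_max_right _ _, fun z => ?_⟩
  by_cases hz : z.1 ∈ BB d l ∧ z.2 ∈ BB d l
  · exact (hC z hz).trans (le_max_left _ _)
  · rw [h0 z hz]; simp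

lemma integrable_q {d l : ℕ} {q : Euc d × Euc d → ℝ} (hq : Continuous q)
    (h0 : ∀ z, ¬ (z.1 ∈ BB d l ∧ z.2 ∈ BB d l) → q z = 0) {p : Euc d → ℝ} (hp : Integrable p) :
    Integrable (fun z => q z * p z.1) (volume.prod volume) := by
  obtain ⟨C, hC0, hC⟩ := bdd_of_supp hq h0
  have hB : Integrable ((BB d l).indicator (fun _ => (1:ℝ))) :=
    (integrable_indicator_iff Metric.isClosed_closedBall.measurableSet).2
      (integrableOn_const (measure_closedBall_lt_top.ne))
  have := (hp.mul_prod hB).bdd_mul (f := q) (c := C) hq.aestronglyMeasurable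
    (Filter.Eventually.of_forall hC)
  refine this.congr (Filter.Eventually.of_forall fun z => ?_)
  by_cases hz : z.2 ∈ BB d l
  · simp [hz]
  · simp [hz, h0 z (fun h => hz h.2)]

/-- the coefficient function -/
def cg (d : ℕ) (ν : ℝ) (l : ℕ) (g : Euc d × Euc d → ℝ) (z : Euc d × Euc d) : ℝ :=
  ker d ν l z * (2 - Real.exp (g z) - Real.exp (- g z.swap))

lemma cg_cont (d : ℕ) {ν : ℝ} (hν : 0 < ν) (l : ℕ) {g : Euc d × Euc d → ℝ} (hg : Continuous g) :
    Continuous (cg d ν l g) := by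
  unfold cg
  have := ker_cont d hν l
  have := hg.comp continuous_swap
  simp only [Function.comp_def] at this
  fun_prop

lemma cg_zero (d : ℕ) (ν : ℝ) (l : ℕ) (g : Euc d × Euc d → ℝ) (z)
    (hz : ¬ (z.1 ∈ BB d l ∧ z.2 ∈ BB d l)) : cg d ν l g z = 0 := by
  unfold cg; rw [ker_zero d ν l z hz, zero_mul]

def hfun (d : ℕ) (ν γ : ℝ) (l : ℕ) (g : Euc d × Euc d → ℝ) (x : Euc d) : ℝ :=
  wt γ x ^ 2 * ∫ y in BB d l, cg d ν l g (x, y)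

lemma hfun_cont (d : ℕ) {ν : ℝ} (γ : ℝ) (hν : 0 < ν) (l : ℕ) {g : Euc d × Euc d → ℝ}
    (hg : Continuous g) : Continuous (hfun d ν γ l g) := by
  unfold hfun
  refine ((wt_cont γ).pow 2).mul ?_
  exact continuous_parametric_integral_of_continuous (f := fun x y => cg d ν l g (x, y))
    (cg_cont d hν l hg) (isCompact_closedBall _ _)

lemma hfun_bdd (d : ℕ) {ν γ : ℝ} (hγ : γ ≤ 0) (hν : 0 < ν) (l : ℕ) {g : Euc d × Euc d → ℝ}
    (hg : Continuous g) : ∃ C, ∀ x, ‖hfun d ν γ l g x‖ ≤ C := by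
  obtain ⟨C, hC0, hC⟩ := bdd_of_supp (cg_cont d hν l hg) (cg_zero d ν l g)
  refine ⟨C * volume.real (BB d l), fun x => ?_⟩
  unfold hfun
  rw [norm_mul]
  have h1 : ‖wt γ x ^ 2‖ ≤ 1 := by
    rw [Real.norm_of_nonneg (by positivity)]
    exact pow_le_one₀ (wt_pos γ x).le (wt_le_one hγ x)
  have h2 := norm_setIntegral_le_of_norm_le_const (μ := volume) (s := BB d l)
    (f := fun y => cg d ν l g (x, y)) (C := C) measure_closedBall_lt_top (fun y _ => hC (x, y))
  calc _ ≤ 1 * (C * volume.real (BB d l)) := mul_le_mul h1 h2 (norm_nonneg _) zero_le_one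
    _ = _ := one_mul _

def hB (d : ℕ) {ν γ : ℝ} (hγ : γ ≤ 0) (hν : 0 < ν) (l : ℕ) (g : C(Euc d × Euc d, ℝ)) :
    BoundedContinuousFunction (Euc d) ℝ :=
  BoundedContinuousFunction.ofNormedAddCommGroup (hfun d ν γ l g)
    (hfun_cont d γ hν l g.continuous) _ (hfun_bdd d hγ hν l g.continuous).choose_spec

lemma pointwise_ineq (A B t : ℝ) :
    A^2 * (1 - Real.exp t) + B^2 * (1 - Real.exp (-t)) ≤ (A - B)^2 := by
  have he : Real.exp t = Real.exp (t/2) ^ 2 := by rw [← Real.exp_nat_mul]; congr 1; push_cast; ring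
  have he' : Real.exp (-t) = Real.exp (-(t/2)) ^ 2 := by
    rw [← Real.exp_nat_mul]; congr 1; push_cast; ring
  have hm : Real.exp (t/2) * Real.exp (-(t/2)) = 1 := by rw [← Real.exp_add]; simp
  rw [he, he']
  have h1 : A * B = (A * Real.exp (t/2)) * (B * Real.exp (-(t/2))) := by
    linear_combination (-A * B) * hm
  nlinarith [sq_nonneg (A * Real.exp (t/2) - B * Real.exp (-(t/2)))]

lemma good_hB (d : ℕ) {ν γ : ℝ} (hγ : γ ≤ 0) (hν : 0 < ν) (l : ℕ) (g : C(Euc d × Euc d, ℝ)) :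
    Good d ν γ (hB d hγ hν l g) := by
  intro G hGm hG0 hGi
  set p : Euc d → ℝ := fun x => wt γ x ^ 2 * G x with hp
  have hwm : Measurable (wt γ : Euc d → ℝ) := (wt_cont γ).measurable
  have hpi : Integrable p := by
    refine hGi.bdd_mul (c := 1) ((hwm.pow_const 2).aestronglyMeasurable)
      (Filter.Eventually.of_forall fun x => ?_)
    rw [Real.norm_of_nonneg (by positivity)]
    exact pow_le_one₀ (wt_pos γ x).le (wt_le_one hγ x)
  have hkc := ker_cont d hν l
  have hgc := g.continuous
  set q1 : Euc d × Euc d → ℝ := fun z => ker d ν l z * (1 - Real.exp (g z)) with hq1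
  set q2 : Euc d × Euc d → ℝ := fun z => ker d ν l z * (1 - Real.exp (- g z.swap)) with hq2
  have c1 : Continuous q1 := by rw [hq1]; fun_prop
  have c2 : Continuous q2 := by
    have := hgc.comp continuous_swap
    simp only [Function.comp_def] at this
    rw [hq2]; fun_prop
  have z1 : ∀ z, ¬ (z.1 ∈ BB d l ∧ z.2 ∈ BB d l) → q1 z = 0 := fun z hz => by
    simp [hq1, ker_zero d ν l z hz]
  have z2 : ∀ z, ¬ (z.1 ∈ BB d l ∧ z.2 ∈ BB d l) → q2 z = 0 := fun z hz => by
    simp [hq2, ker_zero d ν l z hz]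
  have i1 := integrable_q c1 z1 hpi
  have i2 := integrable_q c2 z2 hpi
  have i2s : Integrable (fun z => q2 z.swap * p z.2) (volume.prod volume) := i2.swap
  have hsum : ∫ x, hB d hγ hν l g x * G x
      = ∫ z, (q1 z * p z.1 + q2 z.swap * p z.2) ∂(volume.prod volume) := by
    rw [integral_add i1 i2s]
    have : ∫ z, q2 z.swap * p z.2 ∂(volume.prod volume)
        = ∫ z, q2 z * p z.1 ∂(volume.prod volume) :=
      integral_prod_swap (fun z : Euc d × Euc d => q2 z * p z.1)
    rw [this, ← integral_add i1 i2, integral_prod (fun z : Euc d × Euc d => q1 z * p z.1 + q2 z * p z.1) (i1.add i2)]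
    refine integral_congr_ae (Filter.Eventually.of_forall fun x => ?_)
    have e1 : ∀ y, q1 (x,y) * p x + q2 (x,y) * p x = cg d ν l g (x,y) * p x := by
      intro y
      simp only [hq1, hq2, cg]; ring
    simp only [e1]
    rw [integral_mul_const]
    change hfun d ν γ l g x * G x = _
    unfold hfun
    rw [setIntegral_eq_integral_of_forall_compl_eq_zero]
    · simp only [hp]; ring
    · intro y hy
      exact cg_zero d ν l g (x,y) (fun h => hy h.2)
  rw [hsum]
  refine (ofReal_integral_le' _ _).trans ?_
  unfold JJ
  rw [← lintegral_prod (μ := volume) (ν := volume)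
    (f := fun z : Euc d × Euc d => ENNReal.ofReal ((jap z.1 ^ (γ/2) * Real.sqrt (G z.1)
      - jap z.2 ^ (γ/2) * Real.sqrt (G z.2))^2 / ‖z.1 - z.2‖ ^ ((d : ℝ) + ν)))]
  · refine lintegral_mono fun z => ENNReal.ofReal_le_ofReal ?_
    have hpw := pointwise_ineq (wt γ z.1 * Real.sqrt (G z.1)) (wt γ z.2 * Real.sqrt (G z.2)) (g z)
    rw [mul_pow, mul_pow, Real.sq_sqrt (hG0 _), Real.sq_sqrt (hG0 _)] at hpw
    change _ ≤ (wt γ z.1 * Real.sqrt (G z.1) - wt γ z.2 * Real.sqrt (G z.2))^2 / _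
    have e : q1 z * p z.1 + q2 z.swap * p z.2 = ker d ν l z *
        (wt γ z.1 ^ 2 * G z.1 * (1 - Real.exp (g z))
        + wt γ z.2 ^ 2 * G z.2 * (1 - Real.exp (-g z))) := by
      simp only [hq1, hq2, hp, ker_swap, Prod.swap_swap]; ring
    rw [e, div_eq_mul_inv, mul_comm]
    calc _ ≤ (wt γ z.1 * Real.sqrt (G z.1) - wt γ z.2 * Real.sqrt (G z.2))^2 * ker d ν l z :=
          mul_le_mul_of_nonneg_right hpw (ker_nonneg d ν l z)
      _ ≤ _ := mul_le_mul_of_nonneg_left (ker_le d hν l z) (sq_nonneg _)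
  · have jm : Measurable (jap : Euc d → ℝ) := jap_cont.measurable
    have m1 : Measurable (fun q : Euc d × Euc d => jap q.1) := jm.comp measurable_fst
    have m2 : Measurable (fun q : Euc d × Euc d => jap q.2) := jm.comp measurable_snd
    have m3 : Measurable (fun q : Euc d × Euc d => G q.1) := hGm.comp measurable_fst
    have m4 : Measurable (fun q : Euc d × Euc d => G q.2) := hGm.comp measurable_snd
    refine Measurable.aemeasurable ?_
    fun_prop

def Phi (d : ℕ) (ν γ : ℝ) (l : ℕ) (ρ : Measure (Euc d)) (g : Euc d × Euc d → ℝ) : ℝ :=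
  ∫ z, wt γ z.1 ^ 2 * cg d ν l g z ∂(ρ.prod (volume.restrict (BB d l)))

lemma BB_meas (d l : ℕ) : MeasurableSet (BB d l) := Metric.isClosed_closedBall.measurableSet

instance BB_fin (d l : ℕ) : IsFiniteMeasure ((volume : Measure (Euc d)).restrict (BB d l)) :=
  ⟨by rw [Measure.restrict_apply_univ]; exact measure_closedBall_lt_top⟩

lemma wt_sq_le {d : ℕ} {γ : ℝ} (hγ : γ ≤ 0) (x : Euc d) : |wt γ x ^ 2| ≤ 1 := by
  rw [abs_of_nonneg (by positivity)]
  exact pow_le_one₀ (wt_pos γ x).le (wt_le_one hγ x)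

lemma integral_hB (d : ℕ) {ν γ : ℝ} (hγ : γ ≤ 0) (hν : 0 < ν) (l : ℕ) (g : C(Euc d × Euc d, ℝ))
    (ρ : Measure (Euc d)) [IsProbabilityMeasure ρ] :
    ∫ x, hB d hγ hν l g x ∂ρ = Phi d ν γ l ρ g := by
  unfold Phi
  obtain ⟨C, hC0, hC⟩ := bdd_of_supp (cg_cont d hν l g.continuous) (cg_zero d ν l g)
  have hc := cg_cont d hν l g.continuous
  have hw := wt_cont (d := d) γ
  rw [integral_prod]
  · simp only [integral_const_mul]
    rfl
  · refine Integrable.of_bound (Continuous.aestronglyMeasurable (by fun_prop)) C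
      (Filter.Eventually.of_forall fun z => ?_)
    rw [norm_mul]
    calc _ ≤ 1 * C := mul_le_mul (wt_sq_le hγ _) (hC z) (abs_nonneg _) zero_le_one
      _ = C := one_mul C

lemma cg_meas (d : ℕ) {ν : ℝ} (hν : 0 < ν) (l : ℕ) {g : Euc d × Euc d → ℝ} (hg : Measurable g) :
    Measurable (cg d ν l g) := by
  unfold cg
  have := (ker_cont d hν l).measurable
  have := hg.comp measurable_swap
  simp only [Function.comp_def] at this
  fun_prop

lemma ker_bdd (d : ℕ) {ν : ℝ} (hν : 0 < ν) (l : ℕ) : ∃ C, 0 ≤ C ∧ ∀ z, |ker d ν l z| ≤ C :=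
  bdd_of_supp (ker_cont d hν l) (ker_zero d ν l)

lemma Phi_tendsto (d : ℕ) {ν γ : ℝ} (hγ : γ ≤ 0) (hν : 0 < ν) (l : ℕ)
    (ρ : Measure (Euc d)) [IsProbabilityMeasure ρ] (gk : ℕ → Euc d × Euc d → ℝ)
    (g : Euc d × Euc d → ℝ) (hgk : ∀ k, Measurable (gk k)) (C : ℝ)
    (hb : ∀ᶠ k in Filter.atTop, ∀ z : Euc d × Euc d, z.1 ∈ BB d l → z.2 ∈ BB d l → |gk k z| ≤ C)
    (h1 : ∀ᵐ z ∂(ρ.prod (volume.restrict (BB d l))),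
      Filter.Tendsto (fun k => gk k z) Filter.atTop (nhds (g z)))
    (h2 : ∀ᵐ z ∂(ρ.prod (volume.restrict (BB d l))),
      Filter.Tendsto (fun k => gk k z.swap) Filter.atTop (nhds (g z.swap))) :
    Filter.Tendsto (fun k => Phi d ν γ l ρ (gk k)) Filter.atTop (nhds (Phi d ν γ l ρ g)) := by
  unfold Phi
  obtain ⟨D, hD0, hD⟩ := ker_bdd d hν l
  have hw := (wt_cont (d := d) γ).measurable
  refine tendsto_integral_filter_of_dominated_convergence (fun _ => D * (2 + 2 * Real.exp C)) ?_ ?_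
    (integrable_const _) ?_
  · refine Filter.Eventually.of_forall fun k => Measurable.aestronglyMeasurable ?_
    have := cg_meas d hν l (hgk k)
    fun_prop
  · filter_upwards [hb] with k hk
    refine Filter.Eventually.of_forall fun z => ?_
    rw [norm_mul]
    have hcg : ‖cg d ν l (gk k) z‖ ≤ D * (2 + 2 * Real.exp C) := by
      by_cases hz : z.1 ∈ BB d l ∧ z.2 ∈ BB d l
      · unfold cg
        rw [norm_mul]
        refine mul_le_mul (hD z) ?_ (norm_nonneg _) hD0
        have e1 : Real.exp (gk k z) ≤ Real.exp C :=
          Real.exp_le_exp.2 ((le_abs_self _).trans (hk z hz.1 hz.2))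
        have e2 : Real.exp (-gk k z.swap) ≤ Real.exp C :=
          Real.exp_le_exp.2 ((neg_le_abs _).trans (hk z.swap hz.2 hz.1))
        have p1 := Real.exp_pos (gk k z)
        have p2 := Real.exp_pos (-gk k z.swap)
        rw [Real.norm_eq_abs, abs_le]
        constructor <;> linarith
      · rw [cg_zero d ν l _ z hz, norm_zero]; positivity
    calc _ ≤ 1 * (D * (2 + 2 * Real.exp C)) :=
          mul_le_mul (wt_sq_le hγ _) hcg (norm_nonneg _) zero_le_one
      _ = _ := one_mul _
  · filter_upwards [h1, h2] with z hz1 hz2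
    unfold cg
    have t1 := (Real.continuous_exp.tendsto _).comp hz1
    have t2 := (Real.continuous_exp.tendsto _).comp hz2.neg
    exact ((((tendsto_const_nhds (x := (2:ℝ))).sub t1).sub t2).const_mul _).const_mul _

lemma C1 (d : ℕ) {ν γ : ℝ} (hγ : γ ≤ 0) (hν : 0 < ν) (l : ℕ)
    (ρ : Measure (Euc d)) [IsProbabilityMeasure ρ] (S : ℝ≥0∞)
    (hS : ∀ i, ENNReal.ofReal (Phi d ν γ l ρ (TopologicalSpace.denseSeq C(Euc d × Euc d, ℝ) i)) ≤ S)
    (g : C(Euc d × Euc d, ℝ)) : ENNReal.ofReal (Phi d ν γ l ρ g) ≤ S := by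
  have hg : g ∈ closure (Set.range (TopologicalSpace.denseSeq C(Euc d × Euc d, ℝ))) :=
    TopologicalSpace.denseRange_denseSeq _ g
  obtain ⟨x, hx, hlim⟩ := mem_closure_iff_seq_limit.1 hg
  have hK : IsCompact (BB d l ×ˢ BB d l) :=
    (isCompact_closedBall _ _).prod (isCompact_closedBall _ _)
  rw [ContinuousMap.tendsto_iff_forall_isCompact_tendstoUniformlyOn] at hlim
  obtain ⟨C, hC⟩ := hK.exists_bound_of_continuousOn g.continuous.continuousOn
  have hpt : ∀ z, Filter.Tendsto (fun k => x k z) Filter.atTop (nhds (g z)) := fun z =>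
    (hlim {z} isCompact_singleton).tendsto_at (Set.mem_singleton z)
  have hb := Metric.tendstoUniformlyOn_iff.1 (hlim _ hK) 1 one_pos
  have := Phi_tendsto d hγ hν l ρ (fun k => x k) g (fun k => (x k).continuous.measurable) (C + 1) ?_
    (Filter.Eventually.of_forall hpt) (Filter.Eventually.of_forall fun z => hpt z.swap)
  · refine le_of_tendsto' ((ENNReal.continuous_ofReal.tendsto _).comp this) fun k => ?_
    obtain ⟨i, hi⟩ := hx k
    simp only [Function.comp_apply, ← hi]
    exact hS i
  · filter_upwards [hb] with k hk z hz1 hz2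
    have h1 := hC z ⟨hz1, hz2⟩
    have h2 := hk z ⟨hz1, hz2⟩
    rw [Real.dist_eq] at h2
    rw [Real.norm_eq_abs] at h1
    have h3 := abs_sub_abs_le_abs_sub (x k z) (g z)
    rw [abs_sub_comm] at h2
    linarith

lemma C2 (d : ℕ) {ν γ : ℝ} (hγ : γ ≤ 0) (hν : 0 < ν) (l : ℕ)
    (ρ : Measure (Euc d)) [IsProbabilityMeasure ρ] (S : ℝ≥0∞)
    (hS : ∀ i, ENNReal.ofReal (Phi d ν γ l ρ (TopologicalSpace.denseSeq C(Euc d × Euc d, ℝ) i)) ≤ S)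
    (g : Euc d × Euc d → ℝ) (hg : Measurable g) (C : ℝ) (hC : ∀ z, |g z| ≤ C) :
    ENNReal.ofReal (Phi d ν γ l ρ g) ≤ S := by
  have hC0 : 0 ≤ C := (abs_nonneg _).trans (hC 0)
  set P := ρ.prod ((volume : Measure (Euc d)).restrict (BB d l)) with hP
  set Qm := P + P.map Prod.swap with hR
  haveI : IsFiniteMeasure (P.map Prod.swap) := by infer_instance
  have hgR : MemLp g 1 Qm := MemLp.of_bound hg.aestronglyMeasurable C (Filter.Eventually.of_forall hC)
  have happ : ∀ n : ℕ, ∃ f : BoundedContinuousFunction (Euc d × Euc d) ℝ,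
      eLpNorm (g - ⇑f) 1 Qm ≤ ((n : ℝ≥0∞) + 1)⁻¹ := fun n => by
    obtain ⟨f, hf, _⟩ := hgR.exists_boundedContinuous_eLpNorm_sub_le (by simp)
      (ε := ((n : ℝ≥0∞) + 1)⁻¹) (by simp)
    exact ⟨f, hf⟩
  choose f hf using happ
  have htm : TendstoInMeasure Qm (fun n => ⇑(f n)) Filter.atTop g := by
    refine tendstoInMeasure_of_tendsto_eLpNorm (p := 1) (by simp)
      (fun n => (f n).continuous.aestronglyMeasurable) hg.aestronglyMeasurable ?_
    refine tendsto_of_tendsto_of_tendsto_of_le_of_le tendsto_const_nhds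
      (h := fun n : ℕ => ((n : ℝ≥0∞) + 1)⁻¹) ?_ (fun n => by simp) fun n => ?_
    · have := (Filter.tendsto_add_atTop_iff_nat 1).2 ENNReal.tendsto_inv_nat_nhds_zero
      simpa using this
    · simp only
      rw [eLpNorm_sub_comm]; exact hf n
  obtain ⟨ns, -, hns⟩ := htm.exists_seq_tendsto_ae
  have hcl : Continuous (fun t : ℝ => max (-C) (min C t)) := by fun_prop
  have hclb : ∀ t, |max (-C) (min C t)| ≤ C := fun t => by
    rw [abs_le]; exact ⟨le_max_left _ _, max_le (by linarith) (min_le_left _ _)⟩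
  have hclg : ∀ z, max (-C) (min C (g z)) = g z := fun z => by
    have := abs_le.1 (hC z)
    rw [min_eq_right this.2, max_eq_right this.1]
  let fk : ℕ → C(Euc d × Euc d, ℝ) := fun k =>
    ⟨fun z => max (-C) (min C (f (ns k) z)), hcl.comp (f (ns k)).continuous⟩
  have hns' : (∀ᵐ z ∂Qm, Filter.Tendsto (fun k => fk k z) Filter.atTop (nhds (g z))) := by
    filter_upwards [hns] with z hz
    have := (hcl.tendsto _).comp hz
    rw [hclg] at this
    exact this
  rw [hR, ae_add_measure_iff] at hns'
  have := Phi_tendsto d hγ hν l ρ (fun k => fk k) g (fun k => (fk k).continuous.measurable) C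
    (Filter.Eventually.of_forall fun k z _ _ => hclb _) hns'.1
    (ae_of_ae_map measurable_swap.aemeasurable hns'.2)
  refine le_of_tendsto' ((ENNReal.continuous_ofReal.tendsto _).comp this) fun k => ?_
  exact C1 d hγ hν l ρ S hS (fk k)

lemma Phi_full (d : ℕ) (ν γ : ℝ) (l : ℕ) (ρ : Measure (Euc d)) [IsProbabilityMeasure ρ]
    (g : Euc d × Euc d → ℝ) :
    Phi d ν γ l ρ g = ∫ z, wt γ z.1 ^ 2 * cg d ν l g z ∂(ρ.prod volume) := by
  unfold Phi
  have e : ρ.prod (volume.restrict (BB d l)) = (ρ.prod volume).restrict (Set.univ ×ˢ BB d l) := by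
    rw [← Measure.prod_restrict, Measure.restrict_univ]
  rw [e, setIntegral_eq_integral_of_forall_compl_eq_zero]
  intro z hz
  rw [cg_zero d ν l g z (fun h => hz ⟨Set.mem_univ _, h.2⟩), mul_zero]

lemma kernel_top (d : ℕ) (hd : 1 ≤ d) {ν : ℝ} (hν : 0 < ν) (x : Euc d) :
    ∫⁻ y : Euc d, ENNReal.ofReal ((‖x - y‖ ^ ((d:ℝ) + ν))⁻¹) = ⊤ := by
  have : Nonempty (Fin d) := ⟨⟨0, hd⟩⟩
  by_contra hI
  set I := ∫⁻ y : Euc d, ENNReal.ofReal ((‖x - y‖ ^ ((d:ℝ) + ν))⁻¹)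
  set c := (volume : Measure (Euc d)) (Metric.ball 0 1) with hc
  have hc0 : c ≠ 0 := (Metric.measure_ball_pos volume 0 one_pos).ne'
  have hct : c ≠ ⊤ := measure_ball_lt_top.ne
  have hbd : ∀ r : ℝ, 0 < r → ENNReal.ofReal ((r ^ ν)⁻¹) * c ≤ I := by
    intro r hr
    have hv : (volume : Measure (Euc d)) (Metric.ball x r \ {x}) = ENNReal.ofReal (r ^ d) * c := by
      rw [measure_sdiff_null (measure_singleton x), Measure.addHaar_ball volume x hr.le]
      simp [hc]
    calc ENNReal.ofReal ((r ^ ν)⁻¹) * c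
        = ENNReal.ofReal ((r ^ ((d:ℝ) + ν))⁻¹) * (ENNReal.ofReal (r ^ d) * c) := by
          rw [← mul_assoc, ← ENNReal.ofReal_mul (by positivity)]
          congr 2
          rw [Real.rpow_add hr, Real.rpow_natCast]
          have : r ^ ν ≠ 0 := (Real.rpow_pos_of_pos hr _).ne'
          field_simp
      _ = ∫⁻ y in Metric.ball x r \ {x}, ENNReal.ofReal ((r ^ ((d:ℝ) + ν))⁻¹) := by
          rw [setLIntegral_const, hv]
      _ ≤ ∫⁻ y in Metric.ball x r \ {x}, ENNReal.ofReal ((‖x - y‖ ^ ((d:ℝ) + ν))⁻¹) := by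
          refine setLIntegral_mono' (Metric.isOpen_ball.measurableSet.diff
            (measurableSet_singleton x)) fun y hy => ENNReal.ofReal_le_ofReal ?_
          have h1 : ‖x - y‖ < r := by
            have := hy.1
            rw [Metric.mem_ball, dist_comm, dist_eq_norm] at this
            exact this
          have h2 : 0 < ‖x - y‖ := by
            rw [norm_pos_iff, sub_ne_zero]
            exact fun h => hy.2 h.symm
          have h3 : 0 < ‖x - y‖ ^ ((d:ℝ) + ν) := Real.rpow_pos_of_pos h2 _
          exact inv_anti₀ h3 (Real.rpow_le_rpow h2.le h1.le (by positivity))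
      _ ≤ I := setLIntegral_le_lintegral _ _
  have hbd' : ∀ t : ℝ, 0 < t → t * c.toReal ≤ I.toReal := by
    intro t ht
    have := hbd (t ^ (-ν⁻¹)) (by positivity)
    rw [← Real.rpow_mul ht.le] at this
    have e : -ν⁻¹ * ν = -1 := by field_simp
    rw [e, Real.rpow_neg_one, inv_inv] at this
    have := ENNReal.toReal_mono hI this
    rwa [ENNReal.toReal_mul, ENNReal.toReal_ofReal ht.le] at this
  have hcp : 0 < c.toReal := ENNReal.toReal_pos hc0 hct
  have := hbd' ((I.toReal + 1) / c.toReal) (by positivity)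
  rw [div_mul_cancel₀ _ hcp.ne'] at this
  linarith

lemma fatou_le {α : Type*} [MeasurableSpace α] (μ : Measure α) (f : ℕ → α → ℝ≥0∞) (F : α → ℝ≥0∞)
    (hf : ∀ n, Measurable (f n)) (hF : ∀ z, Filter.Tendsto (fun n => f n z) Filter.atTop (nhds (F z)))
    (S : ℝ≥0∞) (hS : ∀ n, ∫⁻ z, f n z ∂μ ≤ S) : ∫⁻ z, F z ∂μ ≤ S := by
  have e : ∀ z, F z = Filter.liminf (fun n => f n z) Filter.atTop := fun z => (hF z).liminf_eq.symm
  simp only [e]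
  refine (lintegral_liminf_le hf).trans ?_
  refine (Filter.liminf_le_liminf (Filter.Eventually.of_forall hS)).trans ?_
  simp

lemma C4 (d : ℕ) (hd : 1 ≤ d) {ν γ : ℝ} (hγ : γ ≤ 0) (hν : 0 < ν)
    (ρ : Measure (Euc d)) [IsProbabilityMeasure ρ] (S : ℝ≥0∞)
    (hS : ∀ l (g : Euc d × Euc d → ℝ), Measurable g → ∀ C : ℝ, (∀ z, |g z| ≤ C) →
      ENNReal.ofReal (Phi d ν γ l ρ g) ≤ S)
    (hac : ¬ ρ ≪ volume) : S = ⊤ := by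
  obtain ⟨A, hA, hA0, hρA⟩ : ∃ A, MeasurableSet A ∧ (volume : Measure (Euc d)) A = 0 ∧ ρ A ≠ 0 := by
    by_contra h
    push Not at h
    exact hac (Measure.AbsolutelyContinuous.mk fun s hs hs0 => h s hs hs0)
  set s : Euc d → ℝ := A.indicator (fun _ => 1) with hs
  have hsm : Measurable s := measurable_const.indicator hA
  have hs01 : ∀ x, 0 ≤ s x ∧ s x ≤ 1 := fun x => by
    by_cases hx : x ∈ A <;> simp [hs, hx]
  have hae : ∀ᵐ z ∂(ρ.prod (volume : Measure (Euc d))), s z.2 = 0 := by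
    have h1 : ∀ᵐ y ∂(volume : Measure (Euc d)), s y = 0 := by
      have : ∀ᵐ y ∂(volume : Measure (Euc d)), y ∉ A := measure_eq_zero_iff_ae_notMem.1 hA0
      filter_upwards [this] with y hy
      simp [hs, hy]
    exact Measure.quasiMeasurePreserving_snd.ae h1
  set W : Euc d → ℝ := fun x => 2 * wt γ x ^ 2 * (1 - Real.exp (- s x)) with hW
  have hW0 : ∀ x, 0 ≤ W x := fun x => by
    have : Real.exp (-s x) ≤ 1 := Real.exp_le_one_iff.2 (by linarith [(hs01 x).1])
    have h2 : 0 ≤ 1 - Real.exp (-s x) := by linarith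
    positivity
  have hwm := (wt_cont (d := d) γ).measurable
  have hWm : Measurable W := by rw [hW]; fun_prop
  have hl : ∀ l, ∫⁻ z, ENNReal.ofReal (W z.1 * ker d ν l z) ∂(ρ.prod volume) ≤ S := by
    intro l
    have h1 := hS l (fun z => s z.2 - s z.1) (by fun_prop) 1 (fun z => by
      rw [abs_le]
      have := hs01 z.1
      have := hs01 z.2
      constructor <;> linarith)
    have e : Phi d ν γ l ρ (fun z => s z.2 - s z.1) = ∫ z, W z.1 * ker d ν l z ∂(ρ.prod volume) := by
      rw [Phi_full]
      refine integral_congr_ae ?_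
      filter_upwards [hae] with z hz
      simp only [cg, Prod.fst_swap, Prod.snd_swap, hz, hW]
      have e1 : -(s z.1 - 0) = 0 - s z.1 := by ring
      rw [e1, zero_sub]; ring
    rw [e, ofReal_integral_eq_lintegral_ofReal] at h1
    · exact h1
    · obtain ⟨D, hD0, hD⟩ := ker_bdd d hν l
      have hBi : Integrable ((BB d l).indicator (fun _ => (1:ℝ))) :=
        (integrable_indicator_iff Metric.isClosed_closedBall.measurableSet).2
          (integrableOn_const (measure_closedBall_lt_top.ne))
      have hWi : Integrable W ρ := by
        refine Integrable.of_bound hWm.aestronglyMeasurable 2 (Filter.Eventually.of_forall fun x => ?_)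
        rw [Real.norm_of_nonneg (hW0 x)]
        simp only [hW]
        have h2 := wt_sq_le hγ x
        rw [abs_of_nonneg (by positivity)] at h2
        have h3 := Real.exp_pos (-s x)
        nlinarith [sq_nonneg (wt γ x)]
      have := (hWi.mul_prod hBi).bdd_mul (f := ker d ν l) (c := D)
        (ker_cont d hν l).aestronglyMeasurable (Filter.Eventually.of_forall hD)
      refine this.congr (Filter.Eventually.of_forall fun z => ?_)
      by_cases hz : z.2 ∈ BB d l
      · simp [hz, mul_comm]
      · simp [hz, ker_zero d ν l z (fun h => hz h.2)]
    · exact Filter.Eventually.of_forall fun z => mul_nonneg (hW0 _) (ker_nonneg d ν l z)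
  have hfat := fatou_le (ρ.prod volume) (fun l z => ENNReal.ofReal (W z.1 * ker d ν l z))
    (fun z => ENNReal.ofReal (W z.1 * (‖z.1 - z.2‖ ^ ((d:ℝ) + ν))⁻¹))
    (fun l => by
      have := (ker_cont d hν l).measurable
      fun_prop)
    (fun z => (ENNReal.continuous_ofReal.tendsto _).comp ((ker_tendsto d hν z).const_mul _)) S hl
  rw [lintegral_prod _ (Measurable.aemeasurable (by fun_prop))] at hfat
  have hin : ∀ x, ∫⁻ y, ENNReal.ofReal (W x * (‖x - y‖ ^ ((d:ℝ) + ν))⁻¹)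
      = ENNReal.ofReal (W x) * ⊤ := by
    intro x
    rw [← kernel_top d hd hν x, ← lintegral_const_mul _ (by fun_prop)]
    simp only [ENNReal.ofReal_mul (hW0 x)]
  simp only [hin] at hfat
  have hge : (⊤ : ℝ≥0∞) ≤ ∫⁻ x, ENNReal.ofReal (W x) * ⊤ ∂ρ := by
    calc (⊤ : ℝ≥0∞) = ∫⁻ x in A, ⊤ ∂ρ := by
          rw [setLIntegral_const, ENNReal.top_mul hρA]
      _ ≤ ∫⁻ x in A, ENNReal.ofReal (W x) * ⊤ ∂ρ := by
          refine setLIntegral_mono' hA fun x hx => ?_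
          rw [ENNReal.mul_top]
          have h1 : s x = 1 := by simp [hs, hx]
          have h2 : Real.exp (-1) < 1 := by rw [Real.exp_lt_one_iff]; norm_num
          have h3 := wt_pos γ x
          simp only [hW, h1, ne_eq, ENNReal.ofReal_eq_zero, not_le]
          have : 0 < 1 - Real.exp (-1) := by linarith
          positivity
      _ ≤ _ := setLIntegral_le_lintegral _ _
  exact top_le_iff.1 (hge.trans hfat)

def gG (δ p q : ℝ) : ℝ := (Real.log (q / (p + q) + δ) - Real.log (p / (p + q) + δ)) / 2

lemma gG_anti (δ p q : ℝ) : gG δ q p = - gG δ p q := by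
  unfold gG; rw [add_comm q p]; ring

lemma gG_exp {δ p q : ℝ} (hδ : 0 < δ) (hp : 0 ≤ p) (hq : 0 ≤ q) :
    Real.exp (gG δ p q) = Real.sqrt ((q / (p + q) + δ) / (p / (p + q) + δ)) := by
  unfold gG
  have h1 : 0 < q / (p + q) + δ := by positivity
  have h2 : 0 < p / (p + q) + δ := by positivity
  rw [Real.exp_half, Real.exp_sub, Real.exp_log h1, Real.exp_log h2]

lemma frac_le {p q : ℝ} (hp : 0 ≤ p) (hq : 0 ≤ q) : p / (p + q) ≤ 1 :=
  div_le_one_of_le₀ (by linarith) (by linarith)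

lemma gG_bdd {δ p q : ℝ} (hδ : 0 < δ) (hp : 0 ≤ p) (hq : 0 ≤ q) :
    |gG δ p q| ≤ Real.log (1 + δ) - Real.log δ := by
  have h1 : 0 ≤ q / (p + q) := by positivity
  have h2 : 0 ≤ p / (p + q) := by positivity
  have h3 := frac_le hp hq
  have h4 := frac_le hq hp
  rw [add_comm q p] at h4
  have a1 : Real.log (q / (p + q) + δ) ≤ Real.log (1 + δ) := Real.log_le_log (by linarith) (by linarith)
  have a2 : Real.log (p / (p + q) + δ) ≤ Real.log (1 + δ) := Real.log_le_log (by linarith) (by linarith)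
  have a3 : Real.log δ ≤ Real.log (q / (p + q) + δ) := Real.log_le_log (by linarith) (by linarith)
  have a4 : Real.log δ ≤ Real.log (p / (p + q) + δ) := Real.log_le_log (by linarith) (by linarith)
  unfold gG
  rw [abs_le]; constructor <;> linarith

lemma gG_mul_le {δ p q : ℝ} (hδ : 0 < δ) (hδ1 : δ ≤ 1) (hp : 0 ≤ p) (hq : 0 ≤ q) :
    p * Real.exp (gG δ p q) ≤ 3 * (p + q) := by
  rw [gG_exp hδ hp hq]
  have h1 : 0 ≤ q / (p + q) := by positivity
  have h2 : 0 ≤ p / (p + q) := by positivity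
  have h4 := frac_le hq hp
  rw [add_comm q p] at h4
  set a := p / (p + q)
  set b := q / (p + q)
  have hpa : p = a * (p + q) := by
    rcases (add_nonneg hp hq).eq_or_lt with h | h
    · rw [← h, mul_zero]; linarith
    · simp only [a]; field_simp
  have hs : Real.sqrt ((b + δ) / (a + δ)) ≤ 1 + (b + δ) / (a + δ) := by
    have h0 : 0 ≤ (b + δ) / (a + δ) := by positivity
    rw [Real.sqrt_le_left (by positivity)]
    nlinarith
  have h5 : a * ((b + δ) / (a + δ)) ≤ b + δ := by
    rw [mul_div_assoc', div_le_iff₀ (by positivity)]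
    nlinarith
  have h6 : a ≤ 1 := frac_le hp hq
  have h7 : a * Real.sqrt ((b + δ) / (a + δ)) ≤ 3 := by nlinarith
  calc p * Real.sqrt ((b + δ) / (a + δ)) = (a * Real.sqrt ((b + δ) / (a + δ))) * (p + q) := by
        conv_lhs => rw [hpa]
        ring
    _ ≤ _ := mul_le_mul_of_nonneg_right h7 (by linarith)

lemma gG_tendsto {p q : ℝ} (hp : 0 ≤ p) (hq : 0 ≤ q) :
    Filter.Tendsto (fun n : ℕ => p * Real.exp (gG (((n:ℝ) + 1)⁻¹) p q)) Filter.atTop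
      (nhds (Real.sqrt p * Real.sqrt q)) := by
  have ht : Filter.Tendsto (fun k : ℕ => ((k : ℝ) + 1)⁻¹) Filter.atTop (nhds 0) := by
    simpa using tendsto_one_div_add_atTop_nhds_zero_nat (𝕜 := ℝ)
  rcases hp.eq_or_lt with h | h
  · simp [← h]
  have e : ∀ n : ℕ, Real.exp (gG (((n:ℝ) + 1)⁻¹) p q)
      = Real.sqrt ((q / (p + q) + ((n:ℝ) + 1)⁻¹) / (p / (p + q) + ((n:ℝ) + 1)⁻¹)) := fun n =>
    gG_exp (by positivity) hp hq
  simp only [e]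
  have hpos : 0 < p / (p + q) := by positivity
  have l1 : Filter.Tendsto (fun n : ℕ => (q / (p + q) + ((n:ℝ) + 1)⁻¹) / (p / (p + q) + ((n:ℝ) + 1)⁻¹))
      Filter.atTop (nhds ((q / (p + q) + 0) / (p / (p + q) + 0))) :=
    (tendsto_const_nhds.add ht).div (tendsto_const_nhds.add ht) (by linarith)
  have l2 := ((Real.continuous_sqrt.tendsto _).comp l1).const_mul p
  have e2 : Real.sqrt p * Real.sqrt q = p * Real.sqrt ((q / (p + q) + 0) / (p / (p + q) + 0)) := by
    have : (q / (p + q) + 0) / (p / (p + q) + 0) = q / p := by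
      rw [add_zero, add_zero]; field_simp
    rw [this, Real.sqrt_div hq]
    have := Real.mul_self_sqrt hp
    have h3 : 0 < Real.sqrt p := Real.sqrt_pos.2 h
    field_simp
    rw [Real.sq_sqrt hp, mul_comm]
  rw [e2]
  exact l2

lemma C3 (d : ℕ) {ν γ : ℝ} (hγ : γ ≤ 0) (hν : 0 < ν)
    (ρ : Measure (Euc d)) [IsProbabilityMeasure ρ] (S : ℝ≥0∞)
    (hS : ∀ l (g : Euc d × Euc d → ℝ), Measurable g → ∀ C : ℝ, (∀ z, |g z| ≤ C) →
      ENNReal.ofReal (Phi d ν γ l ρ g) ≤ S)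
    (hac : ρ ≪ volume) :
    fracSobolevSq d (ν/2)
      (fun v => jap v ^ (γ/2) * Real.sqrt ((ρ.rnDeriv volume v).toReal)) ≤ S := by
  set f : Euc d → ℝ := fun v => (ρ.rnDeriv volume v).toReal with hf
  have hf0 : ∀ v, 0 ≤ f v := fun v => ENNReal.toReal_nonneg
  have hfm : Measurable f := (Measure.measurable_rnDeriv _ _).ennreal_toReal
  have hfi : Integrable f := Measure.integrable_toReal_rnDeriv
  have hwm := (wt_cont (d := d) γ).measurable
  set p : Euc d → ℝ := fun v => wt γ v ^ 2 * f v with hp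
  have hp0 : ∀ v, 0 ≤ p v := fun v => mul_nonneg (sq_nonneg _) (hf0 v)
  have hpm : Measurable p := by rw [hp]; fun_prop
  have hpi : Integrable p :=
    hfi.bdd_mul (f := fun v => wt γ v ^ 2) (c := 1) (by fun_prop)
      (Filter.Eventually.of_forall fun v => wt_sq_le hγ v)
  set φ : Euc d → ℝ := fun v => jap v ^ (γ/2) * Real.sqrt (f v) with hφ
  have hφp : ∀ v, φ v = Real.sqrt (p v) := fun v => by
    simp only [hp, hφ]
    rw [Real.sqrt_mul (sq_nonneg _), Real.sqrt_sq (wt_pos γ v).le]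
    rfl
  have hφm : Measurable φ := by
    have : φ = fun v => Real.sqrt (p v) := funext hφp
    rw [this]; fun_prop
  have hPhi : ∀ l (g : Euc d × Euc d → ℝ), Phi d ν γ l ρ g
      = ∫ z, p z.1 * cg d ν l g z ∂((volume : Measure (Euc d)).prod volume) := by
    intro l g
    rw [Phi_full]
    have e1 : ρ = volume.withDensity (ρ.rnDeriv volume) := (Measure.withDensity_rnDeriv_eq _ _ hac).symm
    have e2 : ρ.prod (volume : Measure (Euc d)) = (volume.prod volume).withDensity
        (fun z => ρ.rnDeriv volume z.1) := by
      conv_lhs => rw [e1]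
      rw [prod_withDensity_left (Measure.measurable_rnDeriv _ _)]
    rw [e2, integral_withDensity_eq_integral_toReal_smul]
    · refine integral_congr_ae (Filter.Eventually.of_forall fun z => ?_)
      simp only [hp, hf, smul_eq_mul]; ring
    · exact (Measure.measurable_rnDeriv _ _).comp measurable_fst
    · exact Measure.quasiMeasurePreserving_fst.ae (Measure.rnDeriv_lt_top ρ volume)
  have hi1 : ∀ l, Integrable (fun z => ker d ν l z * p z.1) (volume.prod volume) := fun l =>
    integrable_q (ker_cont d hν l) (ker_zero d ν l) hpi
  have hi2 : ∀ l, Integrable (fun z => ker d ν l z * p z.2) (volume.prod volume) := fun l => by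
    have := (hi1 l).swap
    refine this.congr (Filter.Eventually.of_forall fun z => ?_)
    simp [ker_swap]
  have hsw : ∀ l, ∫ z, ker d ν l z * p z.2 ∂((volume : Measure (Euc d)).prod volume)
      = ∫ z, ker d ν l z * p z.1 ∂((volume : Measure (Euc d)).prod volume) := fun l => by
    rw [← integral_prod_swap]
    simp [ker_swap]
  have hpt : ∀ (z : Euc d × Euc d), (φ z.1 - φ z.2) ^ 2 = p z.1 + p z.2 - 2 * (φ z.1 * φ z.2) := by
    intro z
    have h1 := Real.sq_sqrt (hp0 z.1)
    have h2 := Real.sq_sqrt (hp0 z.2)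
    rw [hφp, hφp]
    nlinarith
  have hi3 : ∀ l, Integrable (fun z => ker d ν l z * (φ z.1 * φ z.2)) (volume.prod volume) := by
    intro l
    refine ((hi1 l).add (hi2 l)).mono' ?_ (Filter.Eventually.of_forall fun z => ?_)
    · have := (ker_cont d hν l).measurable
      exact Measurable.aestronglyMeasurable (by fun_prop)
    · have h1 : 0 ≤ φ z.1 * φ z.2 := by rw [hφp, hφp]; positivity
      rw [Real.norm_of_nonneg (mul_nonneg (ker_nonneg d ν l z) h1)]
      have := hpt z
      have h2 := sq_nonneg (φ z.1 - φ z.2)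
      have h3 : φ z.1 * φ z.2 ≤ p z.1 + p z.2 := by linarith
      have := mul_le_mul_of_nonneg_left h3 (ker_nonneg d ν l z)
      simp only [Pi.add_apply]
      linarith
  have hl : ∀ l, ∫⁻ z, ENNReal.ofReal (ker d ν l z * (φ z.1 - φ z.2) ^ 2)
      ∂((volume : Measure (Euc d)).prod volume) ≤ S := by
    intro l
    have hkm := (ker_cont d hν l).measurable
    have heq : ∫ z, ker d ν l z * (φ z.1 - φ z.2) ^ 2 ∂((volume : Measure (Euc d)).prod volume)
        = ∫ z, (2 * (ker d ν l z * p z.1) - 2 * (ker d ν l z * (φ z.1 * φ z.2)))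
          ∂((volume : Measure (Euc d)).prod volume) := by
      have e : ∀ z : Euc d × Euc d, ker d ν l z * (φ z.1 - φ z.2) ^ 2
          = (ker d ν l z * p z.1 + ker d ν l z * p z.2) - 2 * (ker d ν l z * (φ z.1 * φ z.2)) :=
        fun z => by rw [hpt]; ring
      simp only [e]
      have hadd : Integrable (fun z => ker d ν l z * p z.1 + ker d ν l z * p z.2)
          ((volume : Measure (Euc d)).prod volume) := (hi1 l).add (hi2 l)
      rw [integral_sub hadd ((hi3 l).const_mul 2), integral_add (hi1 l) (hi2 l),
        hsw, integral_sub ((hi1 l).const_mul 2) ((hi3 l).const_mul 2), integral_const_mul 2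
          (fun z => ker d ν l z * p z.1)]
      ring
    have hInteg : Integrable (fun z => ker d ν l z * (φ z.1 - φ z.2) ^ 2)
        ((volume : Measure (Euc d)).prod volume) := by
      refine (((hi1 l).add (hi2 l)).sub ((hi3 l).const_mul 2)).congr
        (Filter.Eventually.of_forall fun z => ?_)
      simp only [hpt, Pi.add_apply, Pi.sub_apply]; ring
    rw [← ofReal_integral_eq_lintegral_ofReal hInteg
      (Filter.Eventually.of_forall fun z => mul_nonneg (ker_nonneg d ν l z) (sq_nonneg _)), heq]
    set gn : ℕ → Euc d × Euc d → ℝ := fun n z => gG (((n:ℝ) + 1)⁻¹) (p z.1) (p z.2) with hgn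
    have hgm : ∀ n, Measurable (gn n) := fun n => by
      simp only [hgn, gG]; fun_prop
    have hb : ∀ n, ENNReal.ofReal (Phi d ν γ l ρ (gn n)) ≤ S := fun n =>
      hS l (gn n) (hgm n) _ (fun z => gG_bdd (by positivity) (hp0 _) (hp0 _))
    have hPn : ∀ n, Phi d ν γ l ρ (gn n) = ∫ z, (2 * (ker d ν l z * p z.1)
        - 2 * (ker d ν l z * (p z.1 * Real.exp (gn n z)))) ∂((volume : Measure (Euc d)).prod volume) := by
      intro n
      rw [hPhi]
      refine integral_congr_ae (Filter.Eventually.of_forall fun z => ?_)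
      have : - gn n z.swap = gn n z := by
        simp only [hgn, Prod.fst_swap, Prod.snd_swap]
        rw [gG_anti, neg_neg]
      simp only [cg, this]; ring
    have hlim : Filter.Tendsto (fun n => Phi d ν γ l ρ (gn n)) Filter.atTop
        (nhds (∫ z, (2 * (ker d ν l z * p z.1) - 2 * (ker d ν l z * (φ z.1 * φ z.2)))
          ∂((volume : Measure (Euc d)).prod volume))) := by
      simp only [hPn]
      refine tendsto_integral_of_dominated_convergence
        (fun z => 2 * (ker d ν l z * p z.1) + 6 * (ker d ν l z * p z.1 + ker d ν l z * p z.2)) ?_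
        (((hi1 l).const_mul 2).add (((hi1 l).add (hi2 l)).const_mul 6)) ?_ ?_
      · intro n
        have := hgm n
        exact Measurable.aestronglyMeasurable (by fun_prop)
      · intro n
        refine Filter.Eventually.of_forall fun z => ?_
        have hk := ker_nonneg d ν l z
        have h1 := gG_mul_le (δ := ((n:ℝ) + 1)⁻¹) (by positivity)
          (inv_le_one_of_one_le₀ (by linarith [(Nat.cast_nonneg n : (0:ℝ) ≤ n)])) (hp0 z.1) (hp0 z.2)
        have h2 := mul_le_mul_of_nonneg_left h1 hk
        have h3 : 0 ≤ ker d ν l z * (p z.1 * Real.exp (gn n z)) :=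
          mul_nonneg hk (mul_nonneg (hp0 _) (Real.exp_pos _).le)
        have h4 : 0 ≤ ker d ν l z * p z.1 := mul_nonneg hk (hp0 _)
        have h5 : 0 ≤ ker d ν l z * p z.2 := mul_nonneg hk (hp0 _)
        change ker d ν l z * (p z.1 * Real.exp (gn n z)) ≤ _ at h2
        rw [Real.norm_eq_abs, abs_le]
        constructor <;> nlinarith
      · refine Filter.Eventually.of_forall fun z => ?_
        have := gG_tendsto (hp0 z.1) (hp0 z.2)
        rw [← hφp, ← hφp] at this
        exact tendsto_const_nhds.sub ((this.const_mul _).const_mul _)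
    exact le_of_tendsto' ((ENNReal.continuous_ofReal.tendsto _).comp hlim) hb
  have hfat := fatou_le ((volume : Measure (Euc d)).prod volume)
    (fun l z => ENNReal.ofReal (ker d ν l z * (φ z.1 - φ z.2) ^ 2))
    (fun z => ENNReal.ofReal ((‖z.1 - z.2‖ ^ ((d:ℝ) + ν))⁻¹ * (φ z.1 - φ z.2) ^ 2))
    (fun l => by
      have := (ker_cont d hν l).measurable
      fun_prop)
    (fun z => (ENNReal.continuous_ofReal.tendsto _).comp ((ker_tendsto d hν z).mul_const _)) S hl
  rw [lintegral_prod _ (Measurable.aemeasurable (by fun_prop))] at hfat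
  refine le_trans (le_of_eq ?_) hfat
  unfold fracSobolevSq
  refine lintegral_congr fun x => lintegral_congr fun y => ?_
  rw [show (d:ℝ) + 2 * (ν/2) = d + ν by ring, div_eq_mul_inv, mul_comm]

/-- Γ-lower semicontinuity of the fractional Fisher information along a
chaotic sequence: if the `j`-marginals of `F_N` converge weakly to the `π`-mixture
`∫ ρ^{⊗j} π(dρ)` for every `j ≥ 2`, then
`liminf_N I^N_{ν,γ}(F_N) ≥ ∫ |⟨·⟩^{γ/2}√ρ|²_{H^{ν/2}} π(dρ)`. -/
theorem stmt_2 (d : ℕ) (hd : 1 ≤ d) (ν γ : ℝ)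
    (hν : ν ∈ Set.Ioo (0 : ℝ) 2) (hγ : γ ≤ 0)
    (F : (N : ℕ) → (Fin N → Euc d) → ℝ)
    (hF : ∀ N, 2 ≤ N → IsSymDensity d N (F N))
    (π : Measure (ProbabilityMeasure (Euc d))) (hπ : IsProbabilityMeasure π)
    (hconv : ∀ j : ℕ, 2 ≤ j → ∀ φ : BoundedContinuousFunction (Fin j → Euc d) ℝ,
      Filter.Tendsto
        (fun N => ∫ V : Fin N → Euc d,
          φ (fun i : Fin j => if h : (i : ℕ) < N then V ⟨i, h⟩ else 0) * F N V)
        Filter.atTop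
        (nhds (∫ ρ : ProbabilityMeasure (Euc d),
          (∫ x, φ x ∂(Measure.pi (fun _ : Fin j => (ρ : Measure (Euc d))))) ∂π))) :
    (∫⁻ ρ : ProbabilityMeasure (Euc d), wSob d ν γ (ρ : Measure (Euc d)) ∂π)
      ≤ Filter.liminf (fun N => fisherInfo d N ν γ (F N)) Filter.atTop := by
  let h : ℕ → BoundedContinuousFunction (Euc d) ℝ := fun m => match m with
    | 0 => 0
    | m + 1 => hB d hγ hν.1 (Nat.unpair m).1
        (TopologicalSpace.denseSeq C(Euc d × Euc d, ℝ) (Nat.unpair m).2)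
  have hgood : ∀ m, Good d ν γ (h m) := by
    intro m
    cases m with
    | zero =>
      intro G _ _ _
      simp [h]
    | succ m => exact good_hB d hγ hν.1 _ _
  refine le_trans (lintegral_mono fun ρ => ?_)
    (sup_lower d ν γ F hF π hπ hconv h rfl hgood)
  set S := ⨆ m, ENNReal.ofReal (∫ x, h m x ∂(ρ : Measure (Euc d))) with hSdef
  have hS : ∀ l (g : Euc d × Euc d → ℝ), Measurable g → ∀ C : ℝ, (∀ z, |g z| ≤ C) →
      ENNReal.ofReal (Phi d ν γ l (ρ : Measure (Euc d)) g) ≤ S := by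
    intro l g hg C hC
    refine C2 d hγ hν.1 l _ S (fun i => ?_) g hg C hC
    rw [← integral_hB d hγ hν.1]
    have := le_iSup (fun m => ENNReal.ofReal (∫ x, h m x ∂(ρ : Measure (Euc d)))) (Nat.pair l i + 1)
    simp only [h, Nat.unpair_pair] at this
    exact this
  change wSob d ν γ (ρ : Measure (Euc d)) ≤ S
  unfold wSob
  split_ifs with hac
  · exact C3 d hγ hν.1 _ S hS hac
  · rw [C4 d hd hγ hν.1 _ S hS hac]

end
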